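/- Let p > 1 and p−2 < α ≤ p−1, and let μ be a finite positive Borel measure on [0,1). Then the following are equivalent: (a) μ is a Carleson measure; (b) there exists a constant C > 0 such that for every f in the Dirichlet-type space 𝒟^p_α, the integral I_μ f(z) = ∫_{[0,1)} f(t)/(1 − t z) dμ(t) converges absolutely for every z in the unit disc 𝔻, the resulting function I_μ f is analytic in 𝔻, belongs to 𝒟^p_α, and ‖I_μ f‖_{𝒟^p_α} ≤ C ‖f‖_{𝒟^p_α}. -/

import Mathlib

open MeasureTheory Set Metric Filter Asymptotics
open scoped ENNReal

/-- Normalized area measure on `ℂ`: Lebesgue area divided by `π`,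
so that the unit disc has total mass `1`. -/
noncomputable def dA : Measure ℂ := (ENNReal.ofReal Real.pi)⁻¹ • volume

/-- The (weighted) Bergman norm `‖f‖_{A^p_α} = ((α+1) ∫_𝔻 (1-|z|²)^α |f(z)|^p dA)^{1/p}`,
as an extended real number. -/
noncomputable def bergmanNorm (p α : ℝ) (f : ℂ → ℂ) : ℝ≥0∞ :=
  (ENNReal.ofReal (α + 1) *
    ∫⁻ z in ball (0 : ℂ) 1, ENNReal.ofReal ((1 - ‖z‖ ^ 2) ^ α * ‖f z‖ ^ p) ∂dA) ^ (1 / p)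

/-- The Dirichlet-type norm `‖f‖_{𝒟^p_α} = |f(0)| + ‖f′‖_{A^p_α}`. -/
noncomputable def dirichletNorm (p α : ℝ) (f : ℂ → ℂ) : ℝ≥0∞ :=
  ENNReal.ofReal ‖f 0‖ + bergmanNorm p α (deriv f)

/-- The Hardy `H^1` norm `sup_{0 ≤ r < 1} (2π)⁻¹ ∫_0^{2π} |f(re^{iθ})| dθ`. -/
noncomputable def hardyNorm (f : ℂ → ℂ) : ℝ≥0∞ :=
  ⨆ r ∈ Ico (0 : ℝ) 1,
    (ENNReal.ofReal (2 * Real.pi))⁻¹ *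
      ∫⁻ θ in Ioc (0 : ℝ) (2 * Real.pi),
        ENNReal.ofReal ‖f ((r : ℂ) * Complex.exp ((θ : ℂ) * Complex.I))‖

/-- The operator `I_μ f(z) = ∫_{[0,1)} f(t)/(1-tz) dμ(t)`. -/
noncomputable def Imu (μ : Measure ℝ) (f : ℂ → ℂ) (z : ℂ) : ℂ :=
  ∫ t : ℝ, f (t : ℂ) / (1 - (t : ℂ) * z) ∂μ

/-- The moment of order `n` of `μ`. -/
noncomputable def moment (μ : Measure ℝ) (n : ℕ) : ℝ := ∫ t : ℝ, t ^ n ∂μ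

/-- `M_∞(r, f) = sup_{|z| = r} |f(z)|`. -/
noncomputable def Minf (f : ℂ → ℂ) (r : ℝ) : ℝ := ⨆ z ∈ sphere (0 : ℂ) r, ‖f z‖

/-!
The derivative of `I_μ f` at `z` is dominated by `9 ∫ |f(t)| / ((1 - t) + |1 - z|)² dμ(t)`. In the
variable `v = 1 - t`, the fundamental theorem of calculus bounds `|f(1 - u)|` by a tail integral
`∫_u^∞ h`, where `h` is built from `|f'|` on the radius. The integrand then decreases in `1 - t`,
so for a Carleson measure `dμ` may be replaced by `C dt`, and
`|(I_μ f)'(z)| ≤ 9 C T h(|1 - z|)` with `T h(a) = ∫_0^∞ v / (a (a + v)) h(v) dv`. Three facts finish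
the proof: integrals over the disc of decreasing functions of `|1 - z|` are controlled by integrals
over the half-line with weight `a^(α+1)`; `T` is bounded on `L^p(v^(α+1) dv)` by the Schur test with
weight `v^(-(α+2)/p)`, which needs `1 < (α+2)/p < 2`; and the sub-mean value property together with
Tonelli's theorem controls the norm of `f'` on the radius by its norm in `A^p_α`.

Conversely, the Cauchy kernels `f_a(z) = 1 / (1 - a z)` satisfy
`(I_μ f_a)'(a) = ∫ t / (1 - a t)³ dμ(t)`, which is at least a multiple of
`a (1 - a)⁻³ μ([a, 1))`, whereas the pointwise estimate for functions in `A^p_α` and the size of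
`‖f_a‖` bound it by a multiple of `(1 - a)⁻²`.
-/

open scoped NNReal

/-! ### Integrals of powers -/

lemma lintegral_Ioo_rpow {r b : ℝ} (hr : -1 < r) (hb : 0 < b) :
    ∫⁻ x in Ioo 0 b, ENNReal.ofReal (x ^ r) = ENNReal.ofReal (b ^ (r + 1) / (r + 1)) := by
  rw [← ofReal_integral_eq_lintegral_ofReal]
  · rw [← integral_Ioc_eq_integral_Ioo, ← intervalIntegral.integral_of_le hb.le,
      integral_rpow (Or.inl hr), Real.zero_rpow (by linarith), sub_zero]
  · exact (intervalIntegral.integrableOn_Ioo_rpow_iff hb).2 hr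
  · filter_upwards [ae_restrict_mem measurableSet_Ioo] with x hx
    exact Real.rpow_nonneg hx.1.le _

lemma lintegral_Ioi_rpow {r b : ℝ} (hr : r < -1) (hb : 0 < b) :
    ∫⁻ x in Ioi b, ENNReal.ofReal (x ^ r) = ENNReal.ofReal (b ^ (r + 1) / (-(r + 1))) := by
  rw [← ofReal_integral_eq_lintegral_ofReal]
  · rw [integral_Ioi_rpow_of_lt hr hb, div_neg, neg_div]
  · exact integrableOn_Ioi_rpow_of_lt hr hb
  · filter_upwards [ae_restrict_mem measurableSet_Ioi] with x hx
    exact Real.rpow_nonneg (hb.trans hx).le _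

lemma lintegral_Ioc_rpow_mul_add_rpow_neg_le {r s v : ℝ} (hr : -1 < r) (hs : 0 ≤ s) (hv : 0 < v) :
    ∫⁻ x in Ioc 0 v, ENNReal.ofReal (x ^ r * (x + v) ^ (-s)) ≤
      ENNReal.ofReal (v ^ (r + 1 - s) / (r + 1)) := by
  have hpow : v ^ (r + 1 - s) / (r + 1) = v ^ (-s) * (v ^ (r + 1) / (r + 1)) := by
    rw [show r + 1 - s = -s + (r + 1) by ring, Real.rpow_add hv, mul_div_assoc]
  rw [hpow, ENNReal.ofReal_mul (by positivity), ← lintegral_Ioo_rpow hr hv,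
    ← lintegral_const_mul' _ _ ENNReal.ofReal_ne_top, restrict_Ioo_eq_restrict_Ioc]
  refine setLIntegral_mono' measurableSet_Ioc fun x hx ↦ ?_
  have hx0 : 0 < x := hx.1
  rw [← ENNReal.ofReal_mul (by positivity), mul_comm]
  gcongr ENNReal.ofReal (?_ * _)
  exact Real.rpow_le_rpow_of_nonpos hv (by linarith) (by linarith)

lemma lintegral_Ioi_rpow_mul_add_rpow_neg_le {r s v : ℝ} (hrs : r - s < -1) (hs : 0 ≤ s)
    (hv : 0 < v) :
    ∫⁻ x in Ioi v, ENNReal.ofReal (x ^ r * (x + v) ^ (-s)) ≤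
      ENNReal.ofReal (v ^ (r + 1 - s) / (s - r - 1)) := by
  rw [show r + 1 - s = r - s + 1 by ring, show s - r - 1 = -(r - s + 1) by ring,
    ← lintegral_Ioi_rpow hrs hv]
  refine setLIntegral_mono' measurableSet_Ioi fun x hx ↦ ?_
  have hx0 : 0 < x := hv.trans hx
  rw [sub_eq_add_neg, Real.rpow_add hx0]
  gcongr ENNReal.ofReal (_ * ?_)
  exact Real.rpow_le_rpow_of_nonpos hx0 (by linarith) (by linarith)

lemma lintegral_rpow_mul_add_rpow_neg_le {r s v : ℝ} (hr : -1 < r) (hrs : r - s < -1)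
    (hv : 0 < v) :
    ∫⁻ x in Ioi 0, ENNReal.ofReal (x ^ r * (x + v) ^ (-s)) ≤
      ENNReal.ofReal ((1 / (r + 1) + 1 / (s - r - 1)) * v ^ (r + 1 - s)) := by
  have hs : 0 ≤ s := by linarith
  have hr' : 0 < r + 1 := by linarith
  have hrs' : 0 < s - r - 1 := by linarith
  rw [add_mul, one_div_mul_eq_div, one_div_mul_eq_div,
    ENNReal.ofReal_add (by positivity) (by positivity), ← Ioc_union_Ioi_eq_Ioi hv.le]
  exact (lintegral_union_le _ _ _).trans (add_le_add
    (lintegral_Ioc_rpow_mul_add_rpow_neg_le hr hs hv)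
    (lintegral_Ioi_rpow_mul_add_rpow_neg_le hrs hs hv))

/-! ### Comparison of integrals of decreasing functions -/

lemma volume_Ioi_inter_setOf_ofReal_lt (c : ℝ≥0∞) :
    volume (Ioi 0 ∩ {s : ℝ | ENNReal.ofReal s < c}) = c := by
  rcases eq_or_ne c ⊤ with rfl | hc
  · simp
  · have : Ioi 0 ∩ {s : ℝ | ENNReal.ofReal s < c} = Ioo 0 c.toReal := by
      ext s
      exact and_congr_right fun hs ↦ ENNReal.ofReal_lt_iff_lt_toReal (le_of_lt hs) hc
    rw [this, Real.volume_Ioo, sub_zero, ENNReal.ofReal_toReal hc]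

lemma lintegral_eq_lintegral_measure_setOf_ofReal_lt {X : Type*} [MeasurableSpace X]
    (m : Measure X) [SFinite m] {f : X → ℝ≥0∞} (hf : Measurable f) :
    ∫⁻ x, f x ∂m = ∫⁻ s in Ioi (0 : ℝ), m {x | ENNReal.ofReal s < f x} := by
  have hmeas : MeasurableSet {q : X × ℝ | ENNReal.ofReal q.2 < f q.1} :=
    measurableSet_lt (by fun_prop) (by fun_prop)
  have hprod := (Measure.prod_apply hmeas (μ := m) (ν := volume.restrict (Ioi 0))).symm.trans
    (Measure.prod_apply_symm hmeas)
  refine Eq.trans (lintegral_congr fun x ↦ ?_) hprod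
  rw [Measure.restrict_apply (measurable_prodMk_left hmeas), inter_comm]
  exact (volume_Ioi_inter_setOf_ofReal_lt (f x)).symm

lemma measure_le_of_forall_measure_Ioc_le {ν ρ : Measure ℝ}
    (h : ∀ b > 0, ν (Ioc 0 b) ≤ ρ (Ioc 0 b)) {S : Set ℝ} (hS : S ⊆ Ioi 0)
    (hlower : ∀ b ∈ S, Ioc 0 b ⊆ S) : ν S ≤ ρ S := by
  rcases S.eq_empty_or_nonempty with rfl | hne
  · simp
  have : Nonempty S := hne.to_subtype
  have : S.OrdConnected := ⟨fun a ha b hb x hx ↦ hlower b hb ⟨(hS ha).trans_le hx.1, hx.2⟩⟩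
  obtain ⟨b, hb_mono, hb_tendsto⟩ := exists_seq_monotone_tendsto_atTop_atTop S
  have hS_eq : S = ⋃ n, Ioc 0 (b n : ℝ) := by
    refine subset_antisymm (fun x hx ↦ ?_) (iUnion_subset fun n ↦ hlower _ (b n).2)
    obtain ⟨n, hn⟩ := (hb_tendsto.eventually_ge_atTop ⟨x, hx⟩).exists
    exact mem_iUnion.2 ⟨n, hS hx, hn⟩
  have hmono : Monotone fun n ↦ Ioc 0 (b n : ℝ) := fun m n hmn ↦ Ioc_subset_Ioc_right (hb_mono hmn)
  calc ν S = ⨆ n, ν (Ioc 0 (b n : ℝ)) := (congrArg ν hS_eq).trans hmono.measure_iUnion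
    _ ≤ ρ S := iSup_le fun n ↦ (h _ (hS (b n).2)).trans (measure_mono (hlower _ (b n).2))

lemma setLIntegral_Ioi_le_of_antitoneOn {ν ρ : Measure ℝ} [SFinite ν] [SFinite ρ]
    (h : ∀ b > 0, ν (Ioc 0 b) ≤ ρ (Ioc 0 b)) {ψ : ℝ → ℝ≥0∞} (hψm : Measurable ψ)
    (hψ : AntitoneOn ψ (Ioi 0)) : ∫⁻ a in Ioi 0, ψ a ∂ν ≤ ∫⁻ a in Ioi 0, ψ a ∂ρ := by
  rw [lintegral_eq_lintegral_measure_setOf_ofReal_lt _ hψm,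
    lintegral_eq_lintegral_measure_setOf_ofReal_lt _ hψm]
  refine lintegral_mono fun s ↦ ?_
  have hmeas : MeasurableSet {a | ENNReal.ofReal s < ψ a} := measurableSet_lt measurable_const hψm
  rw [Measure.restrict_apply hmeas, Measure.restrict_apply hmeas]
  exact measure_le_of_forall_measure_Ioc_le h inter_subset_right fun b hb x hx ↦
    ⟨hb.1.trans_le (hψ hx.1 hb.2 hx.2), hx.1⟩

lemma lintegral_comp_le_of_antitoneOn {X : Type*} [MeasurableSpace X] {m : Measure X} [SFinite m]
    {ρ : Measure ℝ} [SFinite ρ] {d : X → ℝ} (hd : Measurable d) (hd_pos : ∀ᵐ x ∂m, 0 < d x)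
    (h : ∀ b > 0, m {x | d x ≤ b} ≤ ρ (Ioc 0 b)) {ψ : ℝ → ℝ≥0∞} (hψm : Measurable ψ)
    (hψ : AntitoneOn ψ (Ioi 0)) : ∫⁻ x, ψ (d x) ∂m ≤ ∫⁻ a in Ioi 0, ψ a ∂ρ := by
  have hmem : ∀ᵐ a ∂m.map d, a ∈ Ioi 0 := (ae_map_iff hd.aemeasurable measurableSet_Ioi).2 hd_pos
  rw [← lintegral_map hψm hd, ← Measure.restrict_eq_self_of_ae_mem hmem]
  refine setLIntegral_Ioi_le_of_antitoneOn (fun b hb ↦ ?_) hψm hψ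
  rw [Measure.map_apply hd measurableSet_Ioc]
  exact (measure_mono fun x hx ↦ hx.2).trans (h b hb)

lemma apply_one_le_mul_setLIntegral_of_antitoneOn {β : ℝ} (hβ : -1 < β) {ψ : ℝ → ℝ≥0∞}
    (hψ : AntitoneOn ψ (Ioi 0)) :
    ψ 1 ≤ ENNReal.ofReal (β + 1) * ∫⁻ a in Ioi 0, ENNReal.ofReal (a ^ β) * ψ a := by
  have hβ' : 0 < β + 1 := by linarith
  calc ψ 1 = ENNReal.ofReal (β + 1) * ∫⁻ a in Ioo 0 1, ENNReal.ofReal (a ^ β) * ψ 1 := by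
        rw [lintegral_mul_const _ (by fun_prop), lintegral_Ioo_rpow hβ one_pos, ← mul_assoc,
          ← ENNReal.ofReal_mul hβ'.le, Real.one_rpow, mul_one_div_cancel hβ'.ne',
          ENNReal.ofReal_one, one_mul]
    _ ≤ ENNReal.ofReal (β + 1) * ∫⁻ a in Ioo 0 1, ENNReal.ofReal (a ^ β) * ψ a := by
        gcongr 1
        refine setLIntegral_mono' measurableSet_Ioo fun a ha ↦ ?_
        gcongr
        exact hψ ha.1 (mem_Ioi.2 one_pos) ha.2.le
    _ ≤ _ := by gcongr; exact Ioo_subset_Ioi_self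

/-! ### Jensen's inequality and the Schur test -/

section SchurTest

variable {X Y : Type*} [MeasurableSpace X] [MeasurableSpace Y]

lemma le_rpow_one_div_mul_of_rpow_le_mul_rpow {p : ℝ} (hp : 0 < p) {x y K : ℝ≥0∞}
    (h : x ^ p ≤ K * y ^ p) : x ≤ K ^ (1 / p) * y := by
  have h' := ENNReal.rpow_le_rpow h (one_div_nonneg.2 hp.le)
  rwa [ENNReal.mul_rpow_of_nonneg _ _ (one_div_nonneg.2 hp.le), ← ENNReal.rpow_mul,
    ← ENNReal.rpow_mul, mul_one_div_cancel hp.ne', ENNReal.rpow_one, ENNReal.rpow_one] at h'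

lemma lintegral_rpow_le_lintegral_rpow_mul_measure_univ {p : ℝ} (hp : 1 ≤ p) (m : Measure X)
    {f : X → ℝ≥0∞} (hf : AEMeasurable f m) :
    (∫⁻ x, f x ∂m) ^ p ≤ (∫⁻ x, f x ^ p ∂m) * m univ ^ (p - 1) := by
  have hp0 : 0 < p := one_pos.trans_le hp
  have h := ENNReal.rpow_le_rpow
    (eLpNorm'_le_eLpNorm'_mul_rpow_measure_univ one_pos hp hf.aestronglyMeasurable) hp0.le
  rw [eLpNorm'_eq_lintegral_enorm, eLpNorm'_eq_lintegral_enorm,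
    ENNReal.mul_rpow_of_nonneg _ _ hp0.le, ← ENNReal.rpow_mul, ← ENNReal.rpow_mul,
    one_div_mul_cancel hp0.ne', ENNReal.rpow_one, ← ENNReal.rpow_mul, div_one, sub_mul, one_mul,
    one_div_mul_cancel hp0.ne'] at h
  simpa only [enorm_eq_self, ENNReal.rpow_one, one_mul] using h

lemma lintegral_mul_rpow_le {p : ℝ} (hp : 1 ≤ p) {m : Measure X} {k w h : X → ℝ≥0∞}
    (hk : Measurable k) (hw : Measurable w) (hw0 : ∀ᵐ x ∂m, w x ≠ 0) (hwt : ∀ᵐ x ∂m, w x ≠ ⊤)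
    (hh : Measurable h) :
    (∫⁻ x, k x * h x ∂m) ^ p ≤
      (∫⁻ x, k x * w x ∂m) ^ (p - 1) * ∫⁻ x, k x * (w x ^ (1 - p) * h x ^ p) ∂m := by
  have hp0 : 0 ≤ p := by linarith
  have hkw : Measurable fun x ↦ k x * w x := hk.mul hw
  calc (∫⁻ x, k x * h x ∂m) ^ p
      = (∫⁻ x, (w x)⁻¹ * h x ∂m.withDensity fun x ↦ k x * w x) ^ p := by
        rw [lintegral_withDensity_eq_lintegral_mul _ hkw (by fun_prop)]
        congr 1
        refine lintegral_congr_ae ?_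
        filter_upwards [hw0, hwt] with x hx0 hxt
        rw [Pi.mul_apply, mul_assoc, ← mul_assoc (w x), ENNReal.mul_inv_cancel hx0 hxt, one_mul]
    _ ≤ (∫⁻ x, ((w x)⁻¹ * h x) ^ p ∂m.withDensity fun x ↦ k x * w x) *
          (m.withDensity (fun x ↦ k x * w x) univ) ^ (p - 1) :=
        lintegral_rpow_le_lintegral_rpow_mul_measure_univ hp _ (by fun_prop)
    _ = _ := by
        rw [withDensity_apply _ .univ, Measure.restrict_univ, mul_comm,
          lintegral_withDensity_eq_lintegral_mul _ hkw (by fun_prop)]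
        congr 1
        refine lintegral_congr_ae ?_
        filter_upwards [hw0, hwt] with x hx0 hxt
        rw [Pi.mul_apply, mul_assoc, ENNReal.mul_rpow_of_nonneg _ _ hp0, ENNReal.inv_rpow,
          ← ENNReal.rpow_neg, ← mul_assoc (w x), sub_eq_add_neg,
          ENNReal.rpow_add _ _ hx0 hxt, ENNReal.rpow_one]

variable {μ : Measure X} [SFinite μ] {ν : Measure Y} [SFinite ν] {k : X → Y → ℝ≥0∞}
  {σ u : X → ℝ≥0∞} {ω w h : Y → ℝ≥0∞} {A B : ℝ≥0∞}

lemma lintegral_mul_lintegral_mul_rpow_le {p : ℝ} (hp : 1 ≤ p)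
    (hk : Measurable (Function.uncurry k)) (hσ : Measurable σ) (hu : Measurable u)
    (hw : Measurable w) (hw0 : ∀ᵐ y ∂ν, w y ≠ 0) (hwt : ∀ᵐ y ∂ν, w y ≠ ⊤) (hh : Measurable h)
    (hA : ∀ᵐ x ∂μ, ∫⁻ y, k x y * w y ∂ν ≤ A * u x) :
    ∫⁻ x, σ x * (∫⁻ y, k x y * h y ∂ν) ^ p ∂μ ≤
      A ^ (p - 1) *
        ∫⁻ y, (∫⁻ x, σ x * u x ^ (p - 1) * k x y ∂μ) * (w y ^ (1 - p) * h y ^ p) ∂ν := by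
  have hp1 : 0 ≤ p - 1 := by linarith
  have hkx (x : X) : Measurable (k x) := hk.comp measurable_prodMk_left
  have hky (y : Y) : Measurable fun x ↦ k x y := hk.comp measurable_prodMk_right
  have hmeas : Measurable fun q : X × Y ↦
      σ q.1 * u q.1 ^ (p - 1) * k q.1 q.2 * (w q.2 ^ (1 - p) * h q.2 ^ p) := by fun_prop
  calc ∫⁻ x, σ x * (∫⁻ y, k x y * h y ∂ν) ^ p ∂μ
      ≤ ∫⁻ x, A ^ (p - 1) *
          ∫⁻ y, σ x * u x ^ (p - 1) * k x y * (w y ^ (1 - p) * h y ^ p) ∂ν ∂μ := by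
        refine lintegral_mono_ae ?_
        filter_upwards [hA] with x hx
        calc σ x * (∫⁻ y, k x y * h y ∂ν) ^ p
            ≤ σ x * ((A * u x) ^ (p - 1) * ∫⁻ y, k x y * (w y ^ (1 - p) * h y ^ p) ∂ν) := by
              gcongr
              exact (lintegral_mul_rpow_le hp (hkx x) hw hw0 hwt hh).trans (by gcongr)
          _ = _ := by
              simp_rw [mul_assoc (σ x * u x ^ (p - 1))]
              rw [lintegral_const_mul _ (by fun_prop), ENNReal.mul_rpow_of_nonneg _ _ hp1]
              ring
    _ = _ := by
        rw [lintegral_const_mul _ hmeas.lintegral_prod_right',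
          lintegral_lintegral_swap hmeas.aemeasurable]
        congr with y
        have hσuk : Measurable fun x ↦ σ x * u x ^ (p - 1) * k x y := by fun_prop
        exact lintegral_mul_const (w y ^ (1 - p) * h y ^ p) hσuk

lemma lintegral_mul_lintegral_mul_rpow_le_of_schur {p : ℝ} (hp : 1 ≤ p)
    (hk : Measurable (Function.uncurry k)) (hσ : Measurable σ) (hu : Measurable u)
    (hω : Measurable ω) (hw : Measurable w) (hw0 : ∀ᵐ y ∂ν, w y ≠ 0) (hwt : ∀ᵐ y ∂ν, w y ≠ ⊤)
    (hh : Measurable h) (hA : ∀ᵐ x ∂μ, ∫⁻ y, k x y * w y ∂ν ≤ A * u x)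
    (hB : ∀ᵐ y ∂ν, ∫⁻ x, σ x * u x ^ (p - 1) * k x y ∂μ ≤ B * (ω y * w y ^ (p - 1))) :
    ∫⁻ x, σ x * (∫⁻ y, k x y * h y ∂ν) ^ p ∂μ ≤ A ^ (p - 1) * B * ∫⁻ y, ω y * h y ^ p ∂ν := by
  refine (lintegral_mul_lintegral_mul_rpow_le hp hk hσ hu hw hw0 hwt hh hA).trans ?_
  rw [mul_assoc, ← lintegral_const_mul B (by fun_prop)]
  gcongr 1
  refine lintegral_mono_ae ?_
  filter_upwards [hB, hw0, hwt] with y hy hy0 hyt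
  have hcancel : w y ^ (p - 1) * w y ^ (1 - p) = 1 := by
    rw [← ENNReal.rpow_add _ _ hy0 hyt, sub_add_sub_cancel, sub_self, ENNReal.rpow_zero]
  calc _ ≤ B * (ω y * w y ^ (p - 1)) * (w y ^ (1 - p) * h y ^ p) := by gcongr
    _ = B * (ω y * h y ^ p) * (w y ^ (p - 1) * w y ^ (1 - p)) := by ring
    _ = B * (ω y * h y ^ p) := by rw [hcancel, mul_one]

end SchurTest

/-! ### A Hilbert-type operator on the half-line -/

/-- The kernel `v / (a (a + v)) = ∫₀^v (u + a)⁻² du` of `hilbertOp`, meant for `a, v > 0`. -/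
noncomputable def hilbertKernel (a v : ℝ) : ℝ≥0∞ := ENNReal.ofReal (v / (a * (a + v)))

/-- The integral operator with kernel `hilbertKernel`, for functions on `(0, ∞)`. Its value at
`a = |1 - z|` bounds `|(I_μ f)'(z)|`, see `IsCarlesonWith.enorm_deriv_Imu_le_hilbertOp`. -/
noncomputable def hilbertOp (h : ℝ → ℝ≥0∞) (a : ℝ) : ℝ≥0∞ :=
  ∫⁻ v in Ioi 0, hilbertKernel a v * h v

@[fun_prop]
lemma measurable_uncurry_hilbertKernel : Measurable (Function.uncurry hilbertKernel) := by
  unfold hilbertKernel Function.uncurry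
  fun_prop

lemma measurable_hilbertOp {h : ℝ → ℝ≥0∞} (hh : Measurable h) : Measurable (hilbertOp h) :=
  Measurable.lintegral_prod_right (measurable_uncurry_hilbertKernel.mul (hh.comp measurable_snd))

lemma antitoneOn_hilbertOp (h : ℝ → ℝ≥0∞) : AntitoneOn (hilbertOp h) (Ioi 0) := by
  intro a (ha : 0 < a) b (hb : 0 < b) hab
  refine setLIntegral_mono' measurableSet_Ioi fun v (hv : 0 < v) ↦ ?_
  unfold hilbertKernel
  gcongr

lemma lintegral_Ioo_inv_add_sq {a v : ℝ} (ha : 0 < a) (hv : 0 < v) :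
    ∫⁻ u in Ioo 0 v, ENNReal.ofReal ((u + a) ^ 2)⁻¹ = hilbertKernel a v := by
  have hderiv (u : ℝ) (hu : u ∈ uIcc 0 v) :
      HasDerivAt (fun u ↦ -(u + a)⁻¹) ((u + a) ^ 2)⁻¹ u := by
    rw [uIcc_of_le hv.le] at hu
    have hua : u + a ≠ 0 := (add_pos_of_nonneg_of_pos hu.1 ha).ne'
    exact (((hasDerivAt_id u).add_const a).inv hua).neg.congr_deriv (by simp [neg_div])
  have hcont : ContinuousOn (fun u : ℝ ↦ ((u + a) ^ 2)⁻¹) (uIcc 0 v) := by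
    rw [uIcc_of_le hv.le]
    refine ContinuousOn.inv₀ (by fun_prop) fun u hu ↦ ?_
    have := add_pos_of_nonneg_of_pos hu.1 ha
    positivity
  rw [← ofReal_integral_eq_lintegral_ofReal, ← integral_Ioc_eq_integral_Ioo,
    ← intervalIntegral.integral_of_le hv.le,
    intervalIntegral.integral_eq_sub_of_hasDerivAt hderiv hcont.intervalIntegrable]
  · rw [hilbertKernel]
    congr 1
    field
  · exact hcont.intervalIntegrable.1.mono_set Ioo_subset_Ioc_self
  · exact Eventually.of_forall fun x ↦ inv_nonneg.2 (sq_nonneg _)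

lemma setLIntegral_Ioi_setLIntegral_Ioi_swap {F : ℝ → ℝ → ℝ≥0∞}
    (hF : Measurable (Function.uncurry F)) (c : ℝ) :
    ∫⁻ u in Ioi c, ∫⁻ v in Ioi u, F u v = ∫⁻ v in Ioi c, ∫⁻ u in Ioo c v, F u v := by
  have hmeas : Measurable ({q : ℝ × ℝ | q.1 < q.2}.indicator (Function.uncurry F)) :=
    hF.indicator (measurableSet_lt measurable_fst measurable_snd)
  calc ∫⁻ u in Ioi c, ∫⁻ v in Ioi u, F u v
      = ∫⁻ u in Ioi c, ∫⁻ v in Ioi c, (Ioi u).indicator (F u) v := by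
        refine setLIntegral_congr_fun measurableSet_Ioi fun u (hu : c < u) ↦ ?_
        rw [setLIntegral_indicator measurableSet_Ioi, Ioi_inter_Ioi, sup_of_le_left hu.le]
    _ = ∫⁻ v in Ioi c, ∫⁻ u in Ioi c, (Iio v).indicator (F · v) u :=
        lintegral_lintegral_swap hmeas.aemeasurable
    _ = ∫⁻ v in Ioi c, ∫⁻ u in Ioo c v, F u v := by
        refine lintegral_congr fun v ↦ ?_
        rw [setLIntegral_indicator measurableSet_Iio, inter_comm, Ioi_inter_Iio]

lemma lintegral_tail_mul_inv_add_sq {h : ℝ → ℝ≥0∞} (hh : Measurable h) {a : ℝ} (ha : 0 < a) :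
    ∫⁻ u in Ioi 0, (∫⁻ v in Ioi u, h v) * ENNReal.ofReal ((u + a) ^ 2)⁻¹ = hilbertOp h a := by
  calc _ = ∫⁻ u in Ioi 0, ∫⁻ v in Ioi u, ENNReal.ofReal ((u + a) ^ 2)⁻¹ * h v := by
        simp_rw [mul_comm _ (ENNReal.ofReal _), lintegral_const_mul _ hh]
    _ = ∫⁻ v in Ioi 0, ∫⁻ u in Ioo 0 v, ENNReal.ofReal ((u + a) ^ 2)⁻¹ * h v :=
        setLIntegral_Ioi_setLIntegral_Ioi_swap (by fun_prop) 0
    _ = hilbertOp h a := by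
        refine setLIntegral_congr_fun measurableSet_Ioi fun v hv ↦ ?_
        rw [lintegral_mul_const _ (by fun_prop), lintegral_Ioo_inv_add_sq ha hv]

lemma lintegral_rpow_mul_inv_add_le {r v : ℝ} (hr1 : -1 < r) (hr2 : r < 0) (hv : 0 < v) :
    ∫⁻ x in Ioi 0, ENNReal.ofReal (x ^ r * (x + v)⁻¹) ≤
      ENNReal.ofReal ((1 / (r + 1) + 1 / -r) * v ^ r) := by
  simpa [Real.rpow_neg_one] using
    lintegral_rpow_mul_add_rpow_neg_le (s := 1) hr1 (by linarith) hv

lemma lintegral_hilbertKernel_mul_rpow_neg_le {s a : ℝ} (hs1 : 1 < s) (hs2 : s < 2) (ha : 0 < a) :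
    ∫⁻ v in Ioi 0, hilbertKernel a v * ENNReal.ofReal (v ^ (-s)) ≤
      ENNReal.ofReal (1 / (2 - s) + 1 / (s - 1)) * ENNReal.ofReal (a ^ (-s)) := by
  calc _ = ENNReal.ofReal a⁻¹ * ∫⁻ v in Ioi 0, ENNReal.ofReal (v ^ (1 - s) * (v + a)⁻¹) := by
        rw [← lintegral_const_mul _ (by fun_prop)]
        refine setLIntegral_congr_fun measurableSet_Ioi fun v (hv : 0 < v) ↦ ?_
        rw [hilbertKernel, ← ENNReal.ofReal_mul (by positivity),
          ← ENNReal.ofReal_mul (by positivity), sub_eq_add_neg, Real.rpow_add hv, Real.rpow_one]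
        congr 1
        field
    _ ≤ ENNReal.ofReal a⁻¹ *
          ENNReal.ofReal ((1 / (1 - s + 1) + 1 / -(1 - s)) * a ^ (1 - s)) := by
        gcongr
        exact lintegral_rpow_mul_inv_add_le (by linarith) (by linarith) ha
    _ = _ := by
        rw [← ENNReal.ofReal_mul (by positivity), ← ENNReal.ofReal_mul' (by positivity),
          show 1 - s + 1 = 2 - s by ring, neg_sub, sub_eq_add_neg 1 s, Real.rpow_add ha,
          Real.rpow_one]
        congr 1
        field

lemma lintegral_rpow_mul_hilbertKernel_le {s v : ℝ} (hs1 : 1 < s) (hs2 : s < 2) (hv : 0 < v) :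
    ∫⁻ a in Ioi 0, ENNReal.ofReal (a ^ (s - 1)) * hilbertKernel a v ≤
      ENNReal.ofReal (1 / (2 - s) + 1 / (s - 1)) * ENNReal.ofReal (v ^ (s - 1)) := by
  calc _ = ENNReal.ofReal v * ∫⁻ a in Ioi 0, ENNReal.ofReal (a ^ (s - 2) * (a + v)⁻¹) := by
        rw [← lintegral_const_mul _ (by fun_prop)]
        refine setLIntegral_congr_fun measurableSet_Ioi fun a (ha : 0 < a) ↦ ?_
        rw [hilbertKernel, ← ENNReal.ofReal_mul (by positivity),
          ← ENNReal.ofReal_mul (by positivity), show s - 1 = s - 2 + 1 by ring, Real.rpow_add ha,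
          Real.rpow_one]
        congr 1
        field
    _ ≤ ENNReal.ofReal v *
          ENNReal.ofReal ((1 / (s - 2 + 1) + 1 / -(s - 2)) * v ^ (s - 2)) := by
        gcongr
        exact lintegral_rpow_mul_inv_add_le (by linarith) (by linarith) hv
    _ = _ := by
        rw [← ENNReal.ofReal_mul hv.le, ← ENNReal.ofReal_mul' (by positivity),
          show s - 1 = s - 2 + 1 by ring, neg_sub, Real.rpow_add hv, Real.rpow_one]
        congr 1
        ring

lemma exists_lintegral_hilbertOp_rpow_le {p β : ℝ} (hp : 1 ≤ p) (hβ1 : p < β + 1)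
    (hβ2 : β + 1 < 2 * p) :
    ∃ K : ℝ≥0, ∀ h : ℝ → ℝ≥0∞, Measurable h →
      ∫⁻ a in Ioi 0, ENNReal.ofReal (a ^ β) * hilbertOp h a ^ p ≤
        K * ∫⁻ v in Ioi 0, ENNReal.ofReal (v ^ β) * h v ^ p := by
  have hp0 : 0 < p := one_pos.trans_le hp
  set s := (β + 1) / p
  have hs1 : 1 < s := (one_lt_div hp0).2 hβ1
  have hs2 : s < 2 := (div_lt_iff₀ hp0).2 hβ2
  have hexp : β + -s * (p - 1) = s - 1 := by
    have : s * p = β + 1 := div_mul_cancel₀ _ hp0.ne'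
    linear_combination -this
  have hpow {x : ℝ} (hx : 0 < x) :
      ENNReal.ofReal (x ^ β) * ENNReal.ofReal (x ^ (-s)) ^ (p - 1) =
        ENNReal.ofReal (x ^ (s - 1)) := by
    rw [ENNReal.ofReal_rpow_of_pos (by positivity), ← Real.rpow_mul hx.le,
      ← ENNReal.ofReal_mul (by positivity), ← Real.rpow_add hx, hexp]
  set C := (1 / (2 - s) + 1 / (s - 1)).toNNReal
  refine ⟨C ^ (p - 1) * C, fun h hh ↦ ?_⟩
  have hschur := lintegral_mul_lintegral_mul_rpow_le_of_schur (μ := volume.restrict (Ioi 0))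
    (ν := volume.restrict (Ioi 0)) (σ := fun a ↦ ENNReal.ofReal (a ^ β))
    (u := fun a ↦ ENNReal.ofReal (a ^ (-s))) (ω := fun v ↦ ENNReal.ofReal (v ^ β))
    (w := fun v ↦ ENNReal.ofReal (v ^ (-s))) (A := C) (B := C) hp
    measurable_uncurry_hilbertKernel (by fun_prop) (by fun_prop) (by fun_prop) (by fun_prop)
    ?_ (by simp) hh ?_ ?_
  · rwa [ENNReal.coe_mul, ENNReal.coe_rpow_of_nonneg _ (by linarith)]
  all_goals
    filter_upwards [ae_restrict_mem measurableSet_Ioi] with x (hx : 0 < x)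
  · exact (ENNReal.ofReal_pos.2 (by positivity)).ne'
  · exact lintegral_hilbertKernel_mul_rpow_neg_le hs1 hs2 hx
  · rw [hpow hx]
    refine le_of_eq_of_le ?_ (lintegral_rpow_mul_hilbertKernel_le hs1 hs2 hx)
    exact setLIntegral_congr_fun measurableSet_Ioi fun a ha ↦ by simp only [hpow ha]

/-! ### The weighted area measure of the disc -/

/-- The measure `dA_α = (α + 1) (1 - |z|²)^α dA` on the unit disc which defines `A^p_α`, extended by
zero to a measure on `ℂ`. It is a probability measure when `α > -1`. -/
noncomputable def weightedArea (α : ℝ) : Measure ℂ :=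
  (dA.restrict (ball 0 1)).withDensity fun z ↦ ENNReal.ofReal ((α + 1) * (1 - ‖z‖ ^ 2) ^ α)

instance : SFinite dA := by
  unfold dA
  infer_instance

instance (α : ℝ) : SFinite (weightedArea α) := by
  unfold weightedArea
  infer_instance

lemma dA_ball (c : ℂ) {R : ℝ} (hR : 0 ≤ R) : dA (ball c R) = ENNReal.ofReal (R ^ 2) := by
  rw [dA, Measure.smul_apply, Complex.volume_ball, smul_eq_mul, ← ENNReal.ofReal_pow hR, mul_comm,
    mul_assoc, ← NNReal.coe_real_pi, ENNReal.ofReal_coe_nnreal, ENNReal.mul_inv_cancel, mul_one]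
  · simpa using NNReal.pi_ne_zero
  · exact ENNReal.coe_ne_top

lemma ae_weightedArea_mem_ball (α : ℝ) : ∀ᵐ z ∂weightedArea α, z ∈ ball (0 : ℂ) 1 :=
  (withDensity_absolutelyContinuous _ _).ae_le (ae_restrict_mem measurableSet_ball)

lemma setLIntegral_weightedArea (α : ℝ) {s : Set ℂ} (hs : MeasurableSet s) (g : ℂ → ℝ≥0∞) :
    ∫⁻ z in s, g z ∂weightedArea α =
      ∫⁻ z in s ∩ ball 0 1, ENNReal.ofReal ((α + 1) * (1 - ‖z‖ ^ 2) ^ α) * g z ∂dA := by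
  rw [weightedArea, setLIntegral_withDensity_eq_setLIntegral_mul_non_measurable _ (by fun_prop) g hs
    (by simp), Measure.restrict_restrict hs]
  rfl

lemma bergmanNorm_rpow {p : ℝ} (hp : 0 < p) (α : ℝ) (F : ℂ → ℂ) :
    bergmanNorm p α F ^ p = ∫⁻ z, ‖F z‖ₑ ^ p ∂weightedArea α := by
  rw [bergmanNorm, ← ENNReal.rpow_mul, one_div_mul_cancel hp.ne', ENNReal.rpow_one,
    ← setLIntegral_univ (μ := weightedArea α), setLIntegral_weightedArea α .univ, univ_inter,
    ← lintegral_const_mul' _ _ ENNReal.ofReal_ne_top]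
  refine setLIntegral_congr_fun measurableSet_ball fun z hz ↦ ?_
  have hz' : 0 ≤ 1 - ‖z‖ ^ 2 := by
    have := mem_ball_zero_iff.1 hz
    nlinarith [norm_nonneg z]
  rw [ENNReal.ofReal_mul (by positivity), ENNReal.ofReal_mul' (by positivity), mul_assoc,
    ← ENNReal.ofReal_rpow_of_nonneg (norm_nonneg _) hp.le, ofReal_norm]

lemma abs_le_pi_mul_norm_one_sub_polarCoord_symm {r θ : ℝ} (hr : 0 ≤ r) (hθ : |θ| ≤ Real.pi) :
    |θ| ≤ Real.pi * ‖1 - Complex.polarCoord.symm (r, θ)‖ := by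
  have hπ := Real.pi_pos
  set D := ‖1 - Complex.polarCoord.symm (r, θ)‖
  have hD : D ^ 2 = (r - Real.cos θ) ^ 2 + Real.sin θ ^ 2 := by
    rw [Complex.sq_norm, Complex.normSq_apply, Complex.polarCoord_symm_apply]
    simp only [Complex.sub_re, Complex.sub_im, Complex.mul_re, Complex.mul_im, Complex.add_re,
      Complex.add_im, Complex.ofReal_re, Complex.ofReal_im, Complex.I_re, Complex.I_im,
      Complex.one_re, Complex.one_im]
    linear_combination (r ^ 2 - 1) * Real.sin_sq_add_cos_sq θ
  rcases le_total |θ| (Real.pi / 2) with h | h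
  · have hsin : |Real.sin θ| ≤ D :=
      abs_le_of_sq_le_sq (by rw [hD]; nlinarith) (norm_nonneg _)
    have hjordan := (Real.mul_abs_le_abs_sin h).trans hsin
    rw [div_mul_eq_mul_div, div_le_iff₀ hπ] at hjordan
    linarith [abs_nonneg θ]
  · have hcos : Real.cos θ ≤ 0 := by
      rw [← Real.cos_abs]
      exact Real.cos_nonpos_of_pi_div_two_le_of_le h (by linarith)
    have hD1 : 1 ≤ D := by
      refine le_of_sq_le_sq ?_ (norm_nonneg _)
      rw [hD]
      nlinarith [Real.sin_sq_add_cos_sq θ, mul_nonneg hr (neg_nonneg.2 hcos)]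
    nlinarith

lemma indicator_cap_polarCoord_symm_le {b r θ : ℝ} {g : ℝ → ℝ≥0∞} (hr : 0 < r)
    (hθ : θ ∈ Ioo (-Real.pi) Real.pi) :
    ENNReal.ofReal r * ({z | ‖1 - z‖ ≤ b} ∩ ball (0 : ℂ) 1).indicator (fun z ↦ g (1 - ‖z‖))
        (Complex.polarCoord.symm (r, θ)) ≤
      (Ioc 0 b).indicator g (1 - r) *
        (Icc (-(Real.pi * b)) (Real.pi * b)).indicator 1 θ := by
  have hnorm : ‖Complex.polarCoord.symm (r, θ)‖ = r := by
    rw [Complex.norm_polarCoord_symm, abs_of_pos hr]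
  by_cases hz : Complex.polarCoord.symm (r, θ) ∈ {z | ‖1 - z‖ ≤ b} ∩ ball (0 : ℂ) 1
  · obtain ⟨hzb : ‖1 - _‖ ≤ b, hz1⟩ := id hz
    rw [mem_ball_zero_iff, hnorm] at hz1
    have hrb : 1 - r ≤ b := by
      have := norm_sub_norm_le 1 (Complex.polarCoord.symm (r, θ))
      rw [hnorm, norm_one] at this
      linarith
    have hθb : |θ| ≤ Real.pi * b :=
      (abs_le_pi_mul_norm_one_sub_polarCoord_symm hr.le (abs_le.2 ⟨hθ.1.le, hθ.2.le⟩)).trans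
        (mul_le_mul_of_nonneg_left hzb Real.pi_pos.le)
    rw [indicator_of_mem hz, hnorm, indicator_of_mem (mem_Icc.2 (abs_le.1 hθb)),
      indicator_of_mem (show 1 - r ∈ Ioc 0 b from ⟨sub_pos.2 hz1, hrb⟩), Pi.one_apply, mul_one]
    exact mul_le_of_le_one_left zero_le (ENNReal.ofReal_le_one.2 hz1.le)
  · rw [indicator_of_notMem hz, mul_zero]
    exact zero_le

lemma setLIntegral_cap_le {b : ℝ} {g : ℝ → ℝ≥0∞} (hg : Measurable g) :
    ∫⁻ z in {z | ‖1 - z‖ ≤ b} ∩ ball (0 : ℂ) 1, g (1 - ‖z‖) ∂dA ≤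
      ENNReal.ofReal (2 * b) * ∫⁻ x in Ioc 0 b, g x := by
  have hcap : MeasurableSet ({z | ‖1 - z‖ ≤ b} ∩ ball (0 : ℂ) 1) :=
    (measurableSet_le (by fun_prop) measurable_const).inter measurableSet_ball
  have hG : Measurable fun r : ℝ ↦ (Ioc 0 b).indicator g (1 - r) :=
    (hg.indicator measurableSet_Ioc).comp (by fun_prop)
  have hH : Measurable ((Icc (-(Real.pi * b)) (Real.pi * b)).indicator (1 : ℝ → ℝ≥0∞)) :=
    measurable_one.indicator measurableSet_Icc
  have hpolar : ∫⁻ z in {z | ‖1 - z‖ ≤ b} ∩ ball (0 : ℂ) 1, g (1 - ‖z‖) ≤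
      (∫⁻ x in Ioc 0 b, g x) * ENNReal.ofReal (Real.pi * (2 * b)) := by
    rw [← lintegral_indicator hcap, ← Complex.lintegral_comp_polarCoord_symm]
    calc
      _ ≤ ∫⁻ q in polarCoord.target, (Ioc 0 b).indicator g (1 - q.1) *
            (Icc (-(Real.pi * b)) (Real.pi * b)).indicator 1 q.2 :=
        setLIntegral_mono' polarCoord.open_target.measurableSet fun q hq ↦
          indicator_cap_polarCoord_symm_le hq.1 hq.2
      _ ≤ ∫⁻ q : ℝ × ℝ, (Ioc 0 b).indicator g (1 - q.1) *
            (Icc (-(Real.pi * b)) (Real.pi * b)).indicator 1 q.2 := setLIntegral_le_lintegral _ _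
      _ = (∫⁻ x in Ioc 0 b, g x) * ENNReal.ofReal (Real.pi * (2 * b)) := by
        rw [Measure.volume_eq_prod, lintegral_prod_mul hG.aemeasurable hH.aemeasurable,
          lintegral_sub_left_eq_self, lintegral_indicator measurableSet_Ioc,
          lintegral_indicator_one measurableSet_Icc, Real.volume_Icc]
        ring_nf
  rw [dA, Measure.restrict_smul, lintegral_smul_measure, smul_eq_mul]
  calc
    _ ≤ (ENNReal.ofReal Real.pi)⁻¹ *
          ((∫⁻ x in Ioc 0 b, g x) * ENNReal.ofReal (Real.pi * (2 * b))) := by gcongr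
    _ = ENNReal.ofReal (2 * b) * ∫⁻ x in Ioc 0 b, g x := by
      rw [ENNReal.ofReal_mul Real.pi_pos.le, mul_left_comm, ← mul_assoc (_)⁻¹,
        ENNReal.inv_mul_cancel (ENNReal.ofReal_pos.2 Real.pi_pos).ne' ENNReal.ofReal_ne_top,
        one_mul, mul_comm]

lemma rpow_le_rpow_abs_mul_rpow {k x y : ℝ} (α : ℝ) (hk : 0 < k) (hx : 0 < x) (hy : 0 < y)
    (hxy : x ≤ k * y) (hyx : y ≤ k * x) : x ^ α ≤ k ^ |α| * y ^ α := by
  rcases le_total 0 α with hα | hα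
  · rw [abs_of_nonneg hα, ← Real.mul_rpow hk.le hy.le]
    gcongr
  · have h := Real.rpow_le_rpow_of_nonpos hy hyx hα
    rw [Real.mul_rpow hk.le hx.le] at h
    rwa [abs_of_nonpos hα, Real.rpow_neg hk.le, ← div_eq_inv_mul, le_div_iff₀' (by positivity)]

lemma weightedArea_cap_le {α b : ℝ} (hα : -1 < α) (hb : 0 < b) :
    weightedArea α {z | ‖1 - z‖ ≤ b} ≤ ENNReal.ofReal (2 ^ (|α| + 1) * b ^ (α + 2)) := by
  have hα' : 0 < α + 1 := by linarith
  have hcap : MeasurableSet {z : ℂ | ‖1 - z‖ ≤ b} :=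
    measurableSet_le (by fun_prop) measurable_const
  set c := (α + 1) * 2 ^ |α| with hc
  calc
    weightedArea α {z | ‖1 - z‖ ≤ b} =
        ∫⁻ z in {z | ‖1 - z‖ ≤ b} ∩ ball (0 : ℂ) 1,
          ENNReal.ofReal ((α + 1) * (1 - ‖z‖ ^ 2) ^ α) ∂dA := by
      rw [← setLIntegral_one, setLIntegral_weightedArea α hcap]
      simp only [mul_one]
    _ ≤ ∫⁻ z in {z | ‖1 - z‖ ≤ b} ∩ ball (0 : ℂ) 1, ENNReal.ofReal (c * (1 - ‖z‖) ^ α) ∂dA := by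
      refine setLIntegral_mono' (hcap.inter measurableSet_ball) fun z hz ↦ ?_
      have hz1 : ‖z‖ < 1 := mem_ball_zero_iff.1 hz.2
      rw [hc, mul_assoc]
      gcongr
      apply rpow_le_rpow_abs_mul_rpow <;> nlinarith [norm_nonneg z]
    _ ≤ ENNReal.ofReal (2 * b) * ∫⁻ x in Ioc 0 b, ENNReal.ofReal (c * x ^ α) :=
      setLIntegral_cap_le (g := fun x ↦ ENNReal.ofReal (c * x ^ α)) (by fun_prop)
    _ = ENNReal.ofReal (2 ^ (|α| + 1) * b ^ (α + 2)) := by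
      simp_rw [ENNReal.ofReal_mul (show 0 ≤ c by positivity)]
      rw [lintegral_const_mul' _ _ ENNReal.ofReal_ne_top, ← restrict_Ioo_eq_restrict_Ioc,
        lintegral_Ioo_rpow hα hb, ← ENNReal.ofReal_mul (by positivity),
        ← ENNReal.ofReal_mul (by positivity), Real.rpow_add_one two_ne_zero,
        show α + 2 = α + 1 + 1 by ring, Real.rpow_add_one hb.ne' (α + 1)]
      congr 1
      rw [hc]
      field_simp

lemma exists_lintegral_norm_one_sub_le {α : ℝ} (hα : -1 < α) :
    ∃ K : ℝ≥0, ∀ ψ : ℝ → ℝ≥0∞, Measurable ψ → AntitoneOn ψ (Ioi 0) →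
      ∫⁻ z, ψ ‖1 - z‖ ∂weightedArea α ≤
        K * ∫⁻ a in Ioi 0, ENNReal.ofReal (a ^ (α + 1)) * ψ a := by
  have hα' : 0 < α + 2 := by linarith
  set K : ℝ := (α + 2) * 2 ^ (|α| + 1) with hK
  have hK0 : 0 ≤ K := by positivity
  set w : ℝ → ℝ≥0∞ := fun a ↦ ENNReal.ofReal (a ^ (α + 1))
  have hw : Measurable w := by fun_prop
  refine ⟨K.toNNReal, fun ψ hψm hψ ↦ ?_⟩
  have hpos : ∀ᵐ z ∂weightedArea α, 0 < ‖1 - z‖ := by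
    filter_upwards [ae_weightedArea_mem_ball α] with z hz
    rw [norm_pos_iff, sub_ne_zero]
    rintro rfl
    simp at hz
  have hcap (b : ℝ) (hb : 0 < b) : weightedArea α {z | ‖1 - z‖ ≤ b} ≤
      ((K.toNNReal : ℝ≥0∞) • volume.withDensity w) (Ioc 0 b) := by
    rw [Measure.smul_apply, withDensity_apply _ measurableSet_Ioc, ← restrict_Ioo_eq_restrict_Ioc,
      lintegral_Ioo_rpow (by linarith) hb, smul_eq_mul, ← ENNReal.ofReal,
      ← ENNReal.ofReal_mul hK0]
    refine (weightedArea_cap_le hα hb).trans_eq ?_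
    rw [hK, show α + 1 + 1 = α + 2 by ring]
    congr 1
    field_simp
  calc
    ∫⁻ z, ψ ‖1 - z‖ ∂weightedArea α ≤
        ∫⁻ a in Ioi 0, ψ a ∂((K.toNNReal : ℝ≥0∞) • volume.withDensity w) :=
      lintegral_comp_le_of_antitoneOn (by fun_prop) hpos hcap hψm hψ
    _ = K.toNNReal * ∫⁻ a in Ioi 0, w a * ψ a := by
      rw [Measure.restrict_smul, lintegral_smul_measure, restrict_withDensity measurableSet_Ioi,
        lintegral_withDensity_eq_lintegral_mul _ hw hψm, smul_eq_mul]
      rfl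

/-! ### Values of analytic functions on the radius -/

section SubMean

variable {E : Type*} [NormedAddCommGroup E] [NormedSpace ℂ E] [CompleteSpace E] {F : ℂ → E} {c : ℂ}

lemma lintegral_ball_eq_lintegral_polarCoord {g : ℂ → ℝ≥0∞} (hg : Measurable g) (c : ℂ) (R : ℝ) :
    ∫⁻ z in ball c R, g z = ∫⁻ r in Ioo 0 R, ENNReal.ofReal r *
      ∫⁻ θ in Ioo (-Real.pi) Real.pi, g (c + Complex.polarCoord.symm (r, θ)) := by
  have hpolar : Measurable fun q : ℝ × ℝ ↦ Complex.polarCoord.symm q := by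
    simp_rw [Complex.polarCoord_symm_apply]
    fun_prop
  have hind : Measurable ((ball c R).indicator g) := hg.indicator measurableSet_ball
  rw [← lintegral_indicator measurableSet_ball, ← lintegral_add_left_eq_self _ c,
    ← Complex.lintegral_comp_polarCoord_symm, polarCoord_target, Measure.volume_eq_prod,
    ← Measure.prod_restrict, lintegral_prod _ (by fun_prop),
    ← lintegral_indicator measurableSet_Ioi, ← lintegral_indicator measurableSet_Ioo]
  congr with r
  by_cases hr0 : 0 < r; swap
  · rw [indicator_of_notMem (show r ∉ Ioi 0 from hr0), indicator_of_notMem fun h ↦ hr0 h.1]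
  have hmem (θ : ℝ) : c + Complex.polarCoord.symm (r, θ) ∈ ball c R ↔ r < R := by
    rw [mem_ball, dist_self_add_left, Complex.norm_polarCoord_symm, abs_of_pos hr0]
  by_cases hrR : r < R
  · simp only [indicator, hmem, hrR, mem_Ioi, hr0, mem_Ioo, and_self, if_true, smul_eq_mul]
    rw [lintegral_const_mul' _ _ ENNReal.ofReal_ne_top]
  · simp only [indicator, hmem, hrR, mem_Ioi, hr0, mem_Ioo, and_false, if_true, if_false,
      smul_zero, lintegral_zero]

lemma two_pi_mul_enorm_le_lintegral_circle {r : ℝ} (hr : 0 < r)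
    (hF : DiffContOnCl ℂ F (ball c r)) :
    ENNReal.ofReal (2 * Real.pi) * ‖F c‖ₑ ≤
      ∫⁻ θ in Ioo (-Real.pi) Real.pi, ‖F (c + Complex.polarCoord.symm (r, θ))‖ₑ := by
  have hπ := Real.pi_pos
  rw [← abs_of_pos hr] at hF
  have hmean := hF.circleAverage
  rw [Real.circleAverage_eq_integral_add (-Real.pi),
    intervalIntegral.integral_comp_add_right (fun θ ↦ F (circleMap c r θ)), zero_add,
    show 2 * Real.pi + -Real.pi = Real.pi by ring, intervalIntegral.integral_of_le (by linarith),
    integral_Ioc_eq_integral_Ioo] at hmean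
  rw [← hmean, enorm_smul, ← mul_assoc, Real.enorm_eq_ofReal (by positivity),
    ← ENNReal.ofReal_mul (by positivity), mul_inv_cancel₀ (by positivity), ENNReal.ofReal_one,
    one_mul]
  refine (enorm_integral_le_lintegral_enorm _).trans_eq ?_
  congr with θ
  rw [circleMap, Complex.polarCoord_symm_apply, Complex.exp_mul_I]
  push_cast
  rfl

lemma ofReal_sq_mul_enorm_le_setLIntegral_ball {R : ℝ} (hR : 0 < R)
    (hF : DifferentiableOn ℂ F (ball c R)) :
    ENNReal.ofReal (R ^ 2) * ‖F c‖ₑ ≤ ∫⁻ z in ball c R, ‖F z‖ₑ ∂dA := by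
  have hπ := Real.pi_pos
  set G : ℂ → ℝ≥0∞ := (ball c R).indicator fun z ↦ ‖F z‖ₑ
  have hGm : Measurable G := by
    classical
    unfold G
    rw [← piecewise_eq_indicator]
    exact hF.continuousOn.enorm.measurable_piecewise continuousOn_const measurableSet_ball
  have hcircle (r : ℝ) (hr : r ∈ Ioo 0 R) : ENNReal.ofReal (2 * Real.pi) * ‖F c‖ₑ ≤
      ∫⁻ θ in Ioo (-Real.pi) Real.pi, G (c + Complex.polarCoord.symm (r, θ)) := by
    refine (two_pi_mul_enorm_le_lintegral_circle hr.1 ?_).trans_eq ?_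
    · refine (hF.mono ?_).diffContOnCl
      rw [closure_ball _ hr.1.ne']
      exact closedBall_subset_ball hr.2
    · congr with θ
      refine (indicator_of_mem (s := ball c R) ?_ fun z ↦ ‖F z‖ₑ).symm
      rw [mem_ball, dist_self_add_left, Complex.norm_polarCoord_symm, abs_of_pos hr.1]
      exact hr.2
  calc
    ENNReal.ofReal (R ^ 2) * ‖F c‖ₑ = (ENNReal.ofReal Real.pi)⁻¹ * ∫⁻ r in Ioo 0 R,
        ENNReal.ofReal (r ^ (1 : ℝ)) * (ENNReal.ofReal (2 * Real.pi) * ‖F c‖ₑ) := by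
      rw [lintegral_mul_const _ (by fun_prop), lintegral_Ioo_rpow (by norm_num) hR, ← mul_assoc,
        ← mul_assoc, ← ENNReal.ofReal_inv_of_pos hπ, ← ENNReal.ofReal_mul (by positivity),
        ← ENNReal.ofReal_mul (by positivity)]
      norm_num
      field_simp
    _ ≤ (ENNReal.ofReal Real.pi)⁻¹ * ∫⁻ r in Ioo 0 R, ENNReal.ofReal r *
        ∫⁻ θ in Ioo (-Real.pi) Real.pi, G (c + Complex.polarCoord.symm (r, θ)) := by
      gcongr 1
      refine setLIntegral_mono' measurableSet_Ioo fun r hr ↦ ?_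
      rw [Real.rpow_one]
      gcongr
      exact hcircle r hr
    _ = ∫⁻ z in ball c R, ‖F z‖ₑ ∂dA := by
      rw [← lintegral_ball_eq_lintegral_polarCoord hGm, setLIntegral_indicator measurableSet_ball,
        inter_self, dA, Measure.restrict_smul, lintegral_smul_measure, smul_eq_mul]

lemma ofReal_sq_mul_enorm_rpow_le_setLIntegral_ball {p R : ℝ} (hp : 1 ≤ p) (hR : 0 < R)
    (hF : DifferentiableOn ℂ F (ball c R)) :
    ENNReal.ofReal (R ^ 2) * ‖F c‖ₑ ^ p ≤ ∫⁻ z in ball c R, ‖F z‖ₑ ^ p ∂dA := by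
  set V := ENNReal.ofReal (R ^ 2)
  have hV0 : V ≠ 0 := (ENNReal.ofReal_pos.2 (by positivity)).ne'
  have hVtop : V ≠ ⊤ := ENNReal.ofReal_ne_top
  have hV_eq : dA.restrict (ball c R) univ = V := by
    rw [Measure.restrict_apply_univ, dA_ball c hR.le]
  have hVp : V ^ p = V ^ (p - 1) * V := by
    simpa using ENNReal.rpow_add (p - 1) 1 hV0 hVtop
  refine (ENNReal.mul_le_mul_iff_right (a := V ^ (p - 1)) (by simp [hV0, hVtop])
    (ENNReal.rpow_ne_top_of_nonneg (by linarith) hVtop)).1 ?_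
  calc
    V ^ (p - 1) * (V * ‖F c‖ₑ ^ p) = (V * ‖F c‖ₑ) ^ p := by
      rw [ENNReal.mul_rpow_of_nonneg _ _ (by linarith), hVp, mul_assoc]
    _ ≤ (∫⁻ z in ball c R, ‖F z‖ₑ ∂dA) ^ p := by
      gcongr
      exact ofReal_sq_mul_enorm_le_setLIntegral_ball hR hF
    _ ≤ (∫⁻ z in ball c R, ‖F z‖ₑ ^ p ∂dA) * V ^ (p - 1) := by
      rw [← hV_eq]
      exact lintegral_rpow_le_lintegral_rpow_mul_measure_univ hp _
        (hF.continuousOn.enorm.aemeasurable measurableSet_ball)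
    _ = V ^ (p - 1) * ∫⁻ z in ball c R, ‖F z‖ₑ ^ p ∂dA := mul_comm _ _

lemma one_sub_norm_mem_Ioo_of_mem_ball {z : ℂ} (hz : z ∈ ball c ((1 - ‖c‖) / 2)) :
    1 - ‖z‖ ∈ Ioo ((1 - ‖c‖) / 2) (3 * (1 - ‖c‖) / 2) := by
  rw [mem_ball_iff_norm] at hz
  have hle := norm_sub_norm_le z c
  have hge := norm_sub_norm_le c z
  rw [norm_sub_rev] at hge
  constructor <;> linarith

lemma exists_enorm_rpow_le_setLIntegral_weightedArea {p α : ℝ} (hp : 1 ≤ p) (hα : -1 < α) :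
    ∃ K : ℝ≥0, ∀ F : ℂ → E, DifferentiableOn ℂ F (ball 0 1) → ∀ c ∈ ball (0 : ℂ) 1,
      ENNReal.ofReal ((1 - ‖c‖) ^ (α + 2)) * ‖F c‖ₑ ^ p ≤
        K * ∫⁻ z in ball c ((1 - ‖c‖) / 2), ‖F z‖ₑ ^ p ∂weightedArea α := by
  have hα' : 0 < α + 1 := by linarith
  set K : ℝ := 4 * 3 ^ |α| / (α + 1) with hK
  refine ⟨K.toNNReal, fun F hF c hc ↦ ?_⟩
  rw [mem_ball_zero_iff] at hc
  set d := 1 - ‖c‖ with hd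
  have hd0 : 0 < d := by linarith
  have hsub : ball c (d / 2) ⊆ ball 0 1 := fun z hz ↦ by
    have := (one_sub_norm_mem_Ioo_of_mem_ball hz).1
    rw [mem_ball_zero_iff]
    linarith
  have hweight (z : ℂ) (hz : z ∈ ball c (d / 2)) :
      4 * d ^ α ≤ K * ((α + 1) * (1 - ‖z‖ ^ 2) ^ α) := by
    have hz' := one_sub_norm_mem_Ioo_of_mem_ball hz
    rw [← hd, mem_Ioo] at hz'
    have := rpow_le_rpow_abs_mul_rpow (k := 3) (x := d) (y := 1 - ‖z‖ ^ 2) α three_pos hd0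
      (by nlinarith [norm_nonneg z]) (by nlinarith [norm_nonneg z]) (by nlinarith [norm_nonneg z])
    rw [hK, ← mul_assoc, div_mul_cancel₀ _ hα'.ne', mul_assoc]
    linarith
  calc
    ENNReal.ofReal (d ^ (α + 2)) * ‖F c‖ₑ ^ p =
        ENNReal.ofReal (4 * d ^ α) * (ENNReal.ofReal ((d / 2) ^ 2) * ‖F c‖ₑ ^ p) := by
      rw [← mul_assoc, ← ENNReal.ofReal_mul (by positivity), Real.rpow_add hd0, Real.rpow_two]
      ring_nf
    _ ≤ ENNReal.ofReal (4 * d ^ α) * ∫⁻ z in ball c (d / 2), ‖F z‖ₑ ^ p ∂dA := by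
      gcongr
      exact ofReal_sq_mul_enorm_rpow_le_setLIntegral_ball hp (by positivity) (hF.mono hsub)
    _ ≤ ENNReal.ofReal K * ∫⁻ z in ball c (d / 2), ‖F z‖ₑ ^ p ∂weightedArea α := by
      rw [setLIntegral_weightedArea α measurableSet_ball, inter_eq_left.2 hsub,
        ← lintegral_const_mul' _ _ ENNReal.ofReal_ne_top,
        ← lintegral_const_mul' _ _ ENNReal.ofReal_ne_top]
      refine setLIntegral_mono' measurableSet_ball fun z hz ↦ ?_
      rw [← mul_assoc, ← ENNReal.ofReal_mul (by positivity)]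
      exact mul_le_mul_left (ENNReal.ofReal_le_ofReal (hweight z hz)) _

lemma setLIntegral_inv_setOf_mem_ball_le (z : ℂ) :
    ∫⁻ t in {t : ℝ | z ∈ ball (t : ℂ) ((1 - t) / 2)} ∩ Ioo 0 1, ENNReal.ofReal (1 - t)⁻¹ ≤
      (ball 0 1).indicator 2 z := by
  set s := {t : ℝ | z ∈ ball (t : ℂ) ((1 - t) / 2)} ∩ Ioo 0 1
  have hs : MeasurableSet s := by
    simp only [s, mem_ball]
    exact (measurableSet_lt (by fun_prop) (by fun_prop)).inter measurableSet_Ioo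
  have hmem (t : ℝ) (ht : t ∈ s) : 1 - ‖z‖ ∈ Ioo ((1 - t) / 2) (3 * (1 - t) / 2) := by
    have hnorm : ‖(t : ℂ)‖ = t := Complex.norm_of_nonneg ht.2.1.le
    simpa only [hnorm] using one_sub_norm_mem_Ioo_of_mem_ball (c := t) (hnorm.symm ▸ ht.1)
  by_cases hz : ‖z‖ < 1; swap
  · have hempty : s = ∅ :=
      eq_empty_of_forall_notMem fun t ht ↦ hz (by linarith [(hmem t ht).1, ht.2.2])
    rw [hempty, Measure.restrict_empty, lintegral_zero_measure]
    exact zero_le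
  set δ := 1 - ‖z‖
  have hδ : 0 < δ := sub_pos.2 hz
  rw [indicator_of_mem (mem_ball_zero_iff.2 hz)]
  calc
    ∫⁻ t in s, ENNReal.ofReal (1 - t)⁻¹ ≤ ∫⁻ _ in s, ENNReal.ofReal (2 * δ / 3)⁻¹ := by
      refine setLIntegral_mono' hs fun t ht ↦ ?_
      gcongr
      linarith [(hmem t ht).2]
    _ ≤ ENNReal.ofReal (2 * δ / 3)⁻¹ * volume (Icc (1 - 2 * δ) (1 - 2 * δ / 3)) := by
      rw [setLIntegral_const]
      gcongr
      exact fun t ht ↦ ⟨by linarith [(hmem t ht).1], by linarith [(hmem t ht).2]⟩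
    _ = 2 := by
      rw [Real.volume_Icc, ← ENNReal.ofReal_mul (by positivity)]
      ring_nf
      rw [mul_inv_cancel₀ hδ.ne']
      norm_num

lemma setLIntegral_inv_mul_measure_ball_le (m : Measure ℂ) [SFinite m] :
    ∫⁻ t in Ioo (0 : ℝ) 1, ENNReal.ofReal (1 - t)⁻¹ * m (ball (t : ℂ) ((1 - t) / 2)) ≤
      2 * m (ball 0 1) := by
  set S : Set (ℝ × ℂ) := {q | dist q.2 q.1 < (1 - q.1) / 2}
  have hS : MeasurableSet S := measurableSet_lt (by fun_prop) (by fun_prop)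
  set ν : Measure ℝ := (volume.restrict (Ioo 0 1)).withDensity fun t ↦ ENNReal.ofReal (1 - t)⁻¹
  have hfiber (z : ℂ) : ν ((fun t ↦ (t, z)) ⁻¹' S) ≤ (ball 0 1).indicator 2 z := by
    have hs : MeasurableSet ((fun t : ℝ ↦ (t, z)) ⁻¹' S) := hS.preimage (by fun_prop)
    rw [withDensity_apply _ hs, Measure.restrict_restrict hs]
    exact setLIntegral_inv_setOf_mem_ball_le z
  calc
    ∫⁻ t in Ioo (0 : ℝ) 1, ENNReal.ofReal (1 - t)⁻¹ * m (ball (t : ℂ) ((1 - t) / 2)) =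
        ν.prod m S := by
      rw [Measure.prod_apply hS, lintegral_withDensity_eq_lintegral_mul _ (by fun_prop)
        (measurable_measure_prodMk_left hS)]
      rfl
    _ = ∫⁻ z, ν ((fun t ↦ (t, z)) ⁻¹' S) ∂m := Measure.prod_apply_symm hS
    _ ≤ ∫⁻ z, (ball 0 1).indicator 2 z ∂m := lintegral_mono hfiber
    _ = 2 * m (ball 0 1) := by
      rw [lintegral_indicator measurableSet_ball]
      exact setLIntegral_const _ _

lemma exists_setLIntegral_radius_le {p α : ℝ} (hp : 1 ≤ p) (hα : -1 < α) :
    ∃ K : ℝ≥0, ∀ F : ℂ → E, DifferentiableOn ℂ F (ball 0 1) →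
      ∫⁻ t in Ioo (0 : ℝ) 1, ENNReal.ofReal ((1 - t) ^ (α + 1)) * ‖F t‖ₑ ^ p ≤
        K * ∫⁻ z, ‖F z‖ₑ ^ p ∂weightedArea α := by
  obtain ⟨K, hK⟩ := exists_enorm_rpow_le_setLIntegral_weightedArea (E := E) hp hα
  refine ⟨K * 2, fun F hF ↦ ?_⟩
  set m := (weightedArea α).withDensity fun z ↦ ‖F z‖ₑ ^ p
  calc
    ∫⁻ t in Ioo (0 : ℝ) 1, ENNReal.ofReal ((1 - t) ^ (α + 1)) * ‖F t‖ₑ ^ p ≤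
        ∫⁻ t in Ioo (0 : ℝ) 1,
          K * (ENNReal.ofReal (1 - t)⁻¹ * m (ball (t : ℂ) ((1 - t) / 2))) := by
      refine setLIntegral_mono' measurableSet_Ioo fun t ht ↦ ?_
      have ht1 : 0 < 1 - t := sub_pos.2 ht.2
      have hnorm : ‖(t : ℂ)‖ = t := Complex.norm_of_nonneg ht.1.le
      have hKt := hK F hF t (by rw [mem_ball_zero_iff, hnorm]; exact ht.2)
      rw [hnorm] at hKt
      rw [show α + 1 = -1 + (α + 2) by ring, Real.rpow_add ht1, Real.rpow_neg_one,
        ENNReal.ofReal_mul (by positivity), mul_assoc, mul_left_comm (K : ℝ≥0∞),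
        withDensity_apply _ measurableSet_ball]
      exact mul_le_mul_right hKt _
    _ ≤ K * (2 * m (ball 0 1)) := by
      rw [lintegral_const_mul' _ _ ENNReal.coe_ne_top]
      gcongr
      exact setLIntegral_inv_mul_measure_ball_le m
    _ ≤ K * (2 * ∫⁻ z, ‖F z‖ₑ ^ p ∂weightedArea α) := by
      rw [withDensity_apply _ measurableSet_ball]
      gcongr
      exact Measure.restrict_le_self
    _ = _ := by
      rw [ENNReal.coe_mul, mul_assoc]
      rfl

end SubMean

/-! ### The function `I_μ f` and Carleson measures -/

/-- `μ` is a Carleson measure on `[0, 1)` with constant `C`. -/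
def IsCarlesonWith (μ : Measure ℝ) (C : ℝ) : Prop :=
  ∀ t ∈ Ico (0 : ℝ) 1, (μ (Ico t 1)).toReal ≤ C * (1 - t)

lemma IsCarlesonWith.nonneg {μ : Measure ℝ} {C : ℝ} (h : IsCarlesonWith μ C) : 0 ≤ C := by
  simpa using ENNReal.toReal_nonneg.trans (h 0 (by simp))

lemma IsCarlesonWith.lintegral_comp_one_sub_le {μ : Measure ℝ} [IsFiniteMeasure μ] {C : ℝ}
    (h : IsCarlesonWith μ C) (hμ : ∀ᵐ t ∂μ, t ∈ Ico (0 : ℝ) 1) {ψ : ℝ → ℝ≥0∞} (hψm : Measurable ψ)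
    (hψ : AntitoneOn ψ (Ioi 0)) :
    ∫⁻ t, ψ (1 - t) ∂μ ≤ ENNReal.ofReal C * ∫⁻ u in Ioi 0, ψ u := by
  have hC := h.nonneg
  rw [← smul_eq_mul, ← lintegral_smul_measure, ← Measure.restrict_smul]
  refine lintegral_comp_le_of_antitoneOn (by fun_prop) (hμ.mono fun t ht ↦ sub_pos.2 ht.2)
    (fun b hb ↦ ?_) hψm hψ
  set t₀ := max (1 - b) 0
  have ht₀ : t₀ ∈ Ico (0 : ℝ) 1 := ⟨le_max_right _ _, max_lt (by linarith) one_pos⟩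
  calc
    μ {t | 1 - t ≤ b} ≤ μ (Ico t₀ 1) := by
      refine measure_mono_ae ?_
      filter_upwards [hμ] with t ht (htb : 1 - t ≤ b)
      exact ⟨max_le (by linarith) ht.1, ht.2⟩
    _ = ENNReal.ofReal (μ (Ico t₀ 1)).toReal := (ENNReal.ofReal_toReal (measure_ne_top _ _)).symm
    _ ≤ ENNReal.ofReal (C * b) := by
      gcongr
      refine (h t₀ ht₀).trans ?_
      gcongr
      linarith [le_max_left (1 - b) 0]
    _ = (ENNReal.ofReal C • volume) (Ioc 0 b) := by
      rw [Measure.smul_apply, Real.volume_Ioc, sub_zero, smul_eq_mul, ENNReal.ofReal_mul hC]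

lemma ofReal_mem_ball {t : ℝ} (ht : t ∈ Ico 0 1) : (t : ℂ) ∈ ball (0 : ℂ) 1 := by
  simpa [abs_of_nonneg ht.1] using ht.2

lemma one_sub_norm_le_norm_one_sub_mul {w z : ℂ} (hw : ‖w‖ ≤ 1) : 1 - ‖z‖ ≤ ‖1 - w * z‖ := by
  have h := norm_sub_norm_le 1 (w * z)
  rw [norm_one, norm_mul] at h
  nlinarith [norm_nonneg z]

lemma one_sub_add_norm_one_sub_le {t : ℝ} (ht : t ∈ Icc 0 1) {z : ℂ} (hz : ‖z‖ ≤ 1) :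
    1 - t + ‖1 - z‖ ≤ 3 * ‖1 - t * z‖ := by
  have hnorm : ‖(t : ℂ)‖ = t := Complex.norm_of_nonneg ht.1
  have ht1 : 1 - t ≤ ‖1 - t * z‖ := by
    simpa only [hnorm, mul_comm] using one_sub_norm_le_norm_one_sub_mul (z := t) hz
  have hz1 : ‖1 - z‖ ≤ ‖1 - t * z‖ + (1 - t) := by
    have h := norm_sub_le (1 - t * z) ((1 - t : ℝ) * z)
    rw [norm_mul, Complex.norm_of_nonneg (sub_nonneg.2 ht.2),
      show 1 - t * z - (1 - t : ℝ) * z = 1 - z by push_cast; ring] at h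
    nlinarith [ht.2]
  linarith

lemma hasDerivAt_div_one_sub_mul (b : ℂ) {w z : ℂ} (h : 1 - w * z ≠ 0) :
    HasDerivAt (fun z ↦ b / (1 - w * z)) (b * w / (1 - w * z) ^ 2) z := by
  have hlin : HasDerivAt (fun z ↦ 1 - w * z) (-w) z := by
    simpa using ((hasDerivAt_id z).const_mul w).const_sub 1
  exact ((hasDerivAt_const z b).div hlin h).congr_deriv (by ring)

section Imu

variable {μ : Measure ℝ} {f : ℂ → ℂ} {z : ℂ}

lemma aestronglyMeasurable_comp_ofReal (hμ : ∀ᵐ t ∂μ, t ∈ Ico (0 : ℝ) 1)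
    (hf : ContinuousOn f (ball 0 1)) : AEStronglyMeasurable (fun t : ℝ ↦ f t) μ := by
  rw [← Measure.restrict_eq_self_of_ae_mem hμ]
  exact (hf.comp (by fun_prop) fun t ht ↦ ofReal_mem_ball ht).aestronglyMeasurable measurableSet_Ico

lemma integrable_div_one_sub_mul (hμ : ∀ᵐ t ∂μ, t ∈ Ico (0 : ℝ) 1)
    (hf : Integrable (fun t : ℝ ↦ f t) μ) (hz : z ∈ ball (0 : ℂ) 1) :
    Integrable (fun t : ℝ ↦ f t / (1 - t * z)) μ := by
  have hz1 : 0 < 1 - ‖z‖ := sub_pos.2 (mem_ball_zero_iff.1 hz)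
  refine (hf.norm.const_mul (1 - ‖z‖)⁻¹).mono'
    (hf.1.mul (Measurable.aestronglyMeasurable (by fun_prop))) ?_
  filter_upwards [hμ] with t ht
  rw [norm_div, div_eq_inv_mul]
  gcongr
  exact one_sub_norm_le_norm_one_sub_mul ((Complex.norm_of_nonneg ht.1).trans_le ht.2.le)

lemma hasDerivAt_Imu (hμ : ∀ᵐ t ∂μ, t ∈ Ico (0 : ℝ) 1) (hf : Integrable (fun t : ℝ ↦ f t) μ)
    (hz : z ∈ ball (0 : ℂ) 1) :
    HasDerivAt (Imu μ f) (∫ t : ℝ, f t * t / (1 - t * z) ^ 2 ∂μ) z := by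
  obtain ⟨R, hzR, hR⟩ := exists_between (mem_ball_zero_iff.1 hz)
  have hR' : 0 < 1 - R := sub_pos.2 hR
  have hlower {t : ℝ} (ht : t ∈ Ico (0 : ℝ) 1) {x : ℂ} (hx : x ∈ ball 0 R) :
      1 - R ≤ ‖1 - t * x‖ := by
    have := one_sub_norm_le_norm_one_sub_mul (z := x)
      ((Complex.norm_of_nonneg ht.1).trans_le ht.2.le)
    linarith [mem_ball_zero_iff.1 hx]
  refine (hasDerivAt_integral_of_dominated_loc_of_deriv_le (s := ball 0 R)
    (F' := fun z (t : ℝ) ↦ f t * t / (1 - t * z) ^ 2)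
    (bound := fun t : ℝ ↦ ((1 - R) ^ 2)⁻¹ * ‖f t‖) (isOpen_ball.mem_nhds (mem_ball_zero_iff.2 hzR))
    (.of_forall fun x ↦ hf.1.mul (Measurable.aestronglyMeasurable (by fun_prop)))
    (integrable_div_one_sub_mul hμ hf hz)
    ((hf.1.mul (Measurable.aestronglyMeasurable (by fun_prop))).mul
      (Measurable.aestronglyMeasurable (by fun_prop))) ?_ (hf.norm.const_mul _) ?_).2
  · filter_upwards [hμ] with t ht x hx
    rw [norm_div, norm_mul, norm_pow, Complex.norm_of_nonneg ht.1, div_eq_inv_mul]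
    gcongr
    · exact mul_nonneg (norm_nonneg _) ht.1
    · exact hlower ht hx
    · exact mul_le_of_le_one_right (norm_nonneg _) ht.2.le
  · filter_upwards [hμ] with t ht x hx
    exact hasDerivAt_div_one_sub_mul _ (norm_pos_iff.1 (hR'.trans_le (hlower ht hx)))

lemma differentiableOn_Imu (hμ : ∀ᵐ t ∂μ, t ∈ Ico (0 : ℝ) 1)
    (hf : Integrable (fun t : ℝ ↦ f t) μ) : DifferentiableOn ℂ (Imu μ f) (ball 0 1) :=
  fun _ hz ↦ (hasDerivAt_Imu hμ hf hz).differentiableAt.differentiableWithinAt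

lemma enorm_deriv_Imu_le (hμ : ∀ᵐ t ∂μ, t ∈ Ico (0 : ℝ) 1) (hf : Integrable (fun t : ℝ ↦ f t) μ)
    (hz : z ∈ ball (0 : ℂ) 1) :
    ‖deriv (Imu μ f) z‖ₑ ≤
      9 * ∫⁻ t : ℝ, ‖f t‖ₑ * ENNReal.ofReal ((1 - t + ‖1 - z‖) ^ 2)⁻¹ ∂μ := by
  rw [(hasDerivAt_Imu hμ hf hz).deriv, ← lintegral_const_mul' _ _ (by finiteness)]
  refine (enorm_integral_le_lintegral_enorm _).trans (lintegral_mono_ae ?_)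
  filter_upwards [hμ] with t ht
  have ht1 : 0 < 1 - t := sub_pos.2 ht.2
  have hlower := one_sub_add_norm_one_sub_le ⟨ht.1, ht.2.le⟩ (mem_ball_zero_iff.1 hz).le
  have hpos : 0 < ‖1 - t * z‖ := by linarith [norm_nonneg (1 - z)]
  rw [← ofReal_norm, ← ofReal_norm, ← ENNReal.ofReal_mul (norm_nonneg _),
    ← ENNReal.ofReal_ofNat, ← ENNReal.ofReal_mul (by norm_num)]
  gcongr
  rw [norm_div, norm_mul, norm_pow, Complex.norm_of_nonneg ht.1]
  calc
    ‖f t‖ * t / ‖1 - t * z‖ ^ 2 ≤ ‖f t‖ / ‖1 - t * z‖ ^ 2 := by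
      gcongr
      exact mul_le_of_le_one_right (norm_nonneg _) ht.2.le
    _ = 9 * (‖f t‖ * ((3 * ‖1 - t * z‖) ^ 2)⁻¹) := by
      field_simp
      norm_num
    _ ≤ 9 * (‖f t‖ * ((1 - t + ‖1 - z‖) ^ 2)⁻¹) := by gcongr

end Imu

/-! ### The sufficiency of the Carleson condition -/

/-- A function on `(0, ∞)` whose tail integrals dominate `f` on the radius `[0, 1)`, see
`enorm_le_lintegral_radialMajorant`: it is `|f' (1 - v)|` for `v < 1`, and the value `|f 0|`,
spread over `[1, 2)`, accounts for the constant of integration. -/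
noncomputable def radialMajorant (f : ℂ → ℂ) (v : ℝ) : ℝ≥0∞ :=
  (Ioo (0 : ℝ) 1).indicator (fun v ↦ ‖deriv f (1 - v : ℝ)‖ₑ) v +
    (Ico (1 : ℝ) 2).indicator (fun _ ↦ ‖f 0‖ₑ) v

@[fun_prop]
lemma measurable_radialMajorant (f : ℂ → ℂ) : Measurable (radialMajorant f) := by
  have := measurable_deriv f
  exact (Measurable.indicator (by fun_prop) measurableSet_Ioo).add
    (measurable_const.indicator measurableSet_Ico)

lemma radialMajorant_rpow {p : ℝ} (hp : 0 < p) (f : ℂ → ℂ) (v : ℝ) :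
    radialMajorant f v ^ p = (Ioo (0 : ℝ) 1).indicator (fun v ↦ ‖deriv f (1 - v : ℝ)‖ₑ ^ p) v +
      (Ico (1 : ℝ) 2).indicator (fun _ ↦ ‖f 0‖ₑ ^ p) v := by
  unfold radialMajorant
  by_cases hv : v ∈ Ioo (0 : ℝ) 1
  · have hv' : v ∉ Ico (1 : ℝ) 2 := fun h ↦ hv.2.not_ge h.1
    simp only [indicator_of_mem hv, indicator_of_notMem hv', add_zero]
  · by_cases hv' : v ∈ Ico (1 : ℝ) 2 <;> simp [hv, hv', hp]

section

variable {f : ℂ → ℂ}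

lemma enorm_le_add_lintegral_enorm_deriv (hf : DifferentiableOn ℂ f (ball 0 1)) {u : ℝ}
    (hu : 0 < u) (hu1 : u ≤ 1) :
    ‖f (1 - u : ℝ)‖ₑ ≤ (∫⁻ v in Ioo u 1, ‖deriv f (1 - v : ℝ)‖ₑ) + ‖f 0‖ₑ := by
  have hmem (v : ℝ) (hv : v ∈ uIcc u 1) : ((1 - v : ℝ) : ℂ) ∈ ball (0 : ℂ) 1 := by
    rw [uIcc_of_le hu1] at hv
    rw [mem_ball_zero_iff, Complex.norm_of_nonneg (sub_nonneg.2 hv.2)]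
    linarith [hv.1]
  have hderiv (v : ℝ) (hv : v ∈ uIcc u 1) :
      HasDerivAt (fun v : ℝ ↦ f (1 - v : ℝ)) (-deriv f (1 - v : ℝ)) v := by
    have hsub : HasDerivAt (fun v : ℝ ↦ ((1 - v : ℝ) : ℂ)) ((-1 : ℝ) : ℂ) v :=
      ((hasDerivAt_id v).const_sub 1).ofReal_comp
    have hfv := (hf.differentiableAt (isOpen_ball.mem_nhds (hmem v hv))).hasDerivAt
    exact (hfv.comp v hsub).congr_deriv (by simp)
  have hcont : ContinuousOn (fun v : ℝ ↦ -deriv f (1 - v : ℝ)) (uIcc u 1) :=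
    ((hf.deriv isOpen_ball).continuousOn.comp (by fun_prop) hmem).neg
  have hftc := intervalIntegral.integral_eq_sub_of_hasDerivAt hderiv hcont.intervalIntegrable
  have hfu : f (1 - u : ℝ) = -(∫ v in u..1, -deriv f (1 - v : ℝ)) + f 0 := by
    rw [hftc, sub_self, Complex.ofReal_zero]
    ring
  rw [hfu, intervalIntegral.integral_of_le hu1, integral_Ioc_eq_integral_Ioo]
  refine (enorm_add_le _ _).trans ?_
  rw [enorm_neg]
  gcongr
  simpa only [enorm_neg] using enorm_integral_le_lintegral_enorm
    (μ := volume.restrict (Ioo u 1)) (fun v : ℝ ↦ -deriv f (1 - v : ℝ))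

lemma enorm_le_lintegral_radialMajorant (hf : DifferentiableOn ℂ f (ball 0 1)) {u : ℝ}
    (hu : 0 < u) (hu1 : u ≤ 1) : ‖f (1 - u : ℝ)‖ₑ ≤ ∫⁻ v in Ioi u, radialMajorant f v := by
  have := measurable_deriv f
  refine (enorm_le_add_lintegral_enorm_deriv hf hu hu1).trans ?_
  unfold radialMajorant
  rw [lintegral_add_left (Measurable.indicator (by fun_prop) measurableSet_Ioo),
    setLIntegral_indicator measurableSet_Ioo, setLIntegral_indicator measurableSet_Ico]
  gcongr
  · exact fun v hv ↦ ⟨⟨hu.trans hv.1, hv.2⟩, hv.1⟩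
  · calc
      ‖f 0‖ₑ = ∫⁻ _ in Ioo (1 : ℝ) 2, ‖f 0‖ₑ := by norm_num [Real.volume_Ioo]
      _ ≤ ∫⁻ _ in Ico 1 2 ∩ Ioi u, ‖f 0‖ₑ :=
        lintegral_mono_set fun v hv ↦ ⟨⟨hv.1.le, hv.2⟩, hu1.trans_lt hv.1⟩

end

lemma lintegral_mul_radialMajorant_rpow {p : ℝ} (hp : 0 < p) (f : ℂ → ℂ) {w : ℝ → ℝ≥0∞}
    (hw : Measurable w) :
    ∫⁻ v in Ioi 0, w v * radialMajorant f v ^ p =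
      (∫⁻ v in Ioo (0 : ℝ) 1, w v * ‖deriv f (1 - v : ℝ)‖ₑ ^ p) +
        ∫⁻ v in Ico (1 : ℝ) 2, w v * ‖f 0‖ₑ ^ p := by
  have := measurable_deriv f
  simp only [radialMajorant_rpow hp, mul_add, ← indicator_mul_right (f := w)]
  rw [lintegral_add_left (Measurable.indicator (by fun_prop) measurableSet_Ioo),
    setLIntegral_indicator measurableSet_Ioo, setLIntegral_indicator measurableSet_Ico,
    inter_eq_left.2 Ioo_subset_Ioi_self,
    inter_eq_left.2 (Ico_subset_Ici_self.trans (Ici_subset_Ioi.2 one_pos))]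

lemma exists_lintegral_radialMajorant_rpow_le {p α : ℝ} (hp : 1 ≤ p) (hα : -1 < α) :
    ∃ K : ℝ≥0, ∀ f : ℂ → ℂ, DifferentiableOn ℂ f (ball 0 1) →
      ∫⁻ v in Ioi 0, ENNReal.ofReal (v ^ (α + 1)) * radialMajorant f v ^ p ≤
        K * dirichletNorm p α f ^ p := by
  have hp0 : 0 < p := one_pos.trans_le hp
  obtain ⟨K, hK⟩ := exists_setLIntegral_radius_le (E := ℂ) hp hα
  refine ⟨K + (2 ^ (α + 1) : ℝ).toNNReal, fun f hf ↦ ?_⟩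
  have := measurable_deriv f
  have hderiv : bergmanNorm p α (deriv f) ≤ dirichletNorm p α f := le_add_self
  have hzero : ‖f 0‖ₑ ≤ dirichletNorm p α f := by
    rw [← ofReal_norm]
    exact le_self_add
  have hnear : ∫⁻ v in Ioo (0 : ℝ) 1, ENNReal.ofReal (v ^ (α + 1)) * ‖deriv f (1 - v : ℝ)‖ₑ ^ p ≤
      K * dirichletNorm p α f ^ p := by
    calc
      _ = ∫⁻ t in Ioo (0 : ℝ) 1, ENNReal.ofReal ((1 - t) ^ (α + 1)) * ‖deriv f t‖ₑ ^ p := by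
        simpa using (Measure.measurePreserving_sub_left volume (1 : ℝ)).setLIntegral_comp_preimage
          (s := Ioo 0 1)
          (f := fun t : ℝ ↦ ENNReal.ofReal ((1 - t) ^ (α + 1)) * ‖deriv f t‖ₑ ^ p)
          measurableSet_Ioo (by fun_prop)
      _ ≤ K * bergmanNorm p α (deriv f) ^ p := by
        rw [bergmanNorm_rpow hp0]
        exact hK _ (hf.deriv isOpen_ball)
      _ ≤ K * dirichletNorm p α f ^ p := by gcongr
  have hfar : ∫⁻ v in Ico (1 : ℝ) 2, ENNReal.ofReal (v ^ (α + 1)) * ‖f 0‖ₑ ^ p ≤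
      ENNReal.ofReal (2 ^ (α + 1)) * dirichletNorm p α f ^ p := by
    calc
      _ ≤ ∫⁻ _ in Ico (1 : ℝ) 2, ENNReal.ofReal (2 ^ (α + 1)) * dirichletNorm p α f ^ p := by
        refine setLIntegral_mono' measurableSet_Ico fun v hv ↦ ?_
        have : 0 ≤ v := zero_le_one.trans hv.1
        have : 0 ≤ α + 1 := by linarith
        gcongr
        exact hv.2.le
      _ = ENNReal.ofReal (2 ^ (α + 1)) * dirichletNorm p α f ^ p := by norm_num [Real.volume_Ico]
  rw [lintegral_mul_radialMajorant_rpow hp0 f (by fun_prop), ENNReal.coe_add, add_mul]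
  exact add_le_add hnear hfar

section Carleson

variable {μ : Measure ℝ} [IsFiniteMeasure μ] {C p α : ℝ} {f : ℂ → ℂ}

lemma IsCarlesonWith.lintegral_enorm_mul_inv_sq_le (h : IsCarlesonWith μ C)
    (hμ : ∀ᵐ t ∂μ, t ∈ Ico (0 : ℝ) 1) (hf : DifferentiableOn ℂ f (ball 0 1)) {a : ℝ}
    (ha : 0 < a) :
    ∫⁻ t : ℝ, ‖f t‖ₑ * ENNReal.ofReal ((1 - t + a) ^ 2)⁻¹ ∂μ ≤
      ENNReal.ofReal C * hilbertOp (radialMajorant f) a := by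
  set ψ : ℝ → ℝ≥0∞ := fun u ↦
    (∫⁻ v in Ioi u, radialMajorant f v) * ENNReal.ofReal ((u + a) ^ 2)⁻¹ with hψ
  have htail : Antitone fun u ↦ ∫⁻ v in Ioi u, radialMajorant f v :=
    fun u w huw ↦ lintegral_mono_set (Ioi_subset_Ioi huw)
  have hψ_anti : AntitoneOn ψ (Ioi 0) := by
    intro u (hu : 0 < u) w _ huw
    dsimp only [ψ]
    gcongr
  calc
    _ ≤ ∫⁻ t, ψ (1 - t) ∂μ := by
      refine lintegral_mono_ae ?_
      filter_upwards [hμ] with t ht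
      dsimp only [ψ]
      gcongr
      simpa using enorm_le_lintegral_radialMajorant hf (sub_pos.2 ht.2) (sub_le_self 1 ht.1)
    _ ≤ ENNReal.ofReal C * ∫⁻ u in Ioi 0, ψ u :=
      h.lintegral_comp_one_sub_le hμ (htail.measurable.mul (by fun_prop)) hψ_anti
    _ = ENNReal.ofReal C * hilbertOp (radialMajorant f) a := by
      rw [hψ, lintegral_tail_mul_inv_add_sq (measurable_radialMajorant f) ha]

lemma exists_lintegral_hilbertOp_radialMajorant_rpow_le (hp : 1 ≤ p) (hα1 : p - 2 < α)
    (hα2 : α < 2 * p - 2) :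
    ∃ K : ℝ≥0, ∀ f : ℂ → ℂ, DifferentiableOn ℂ f (ball 0 1) →
      ∫⁻ a in Ioi 0, ENNReal.ofReal (a ^ (α + 1)) * hilbertOp (radialMajorant f) a ^ p ≤
        K * dirichletNorm p α f ^ p := by
  obtain ⟨K₁, hK₁⟩ := exists_lintegral_hilbertOp_rpow_le (p := p) (β := α + 1) hp
    (by linarith) (by linarith)
  obtain ⟨K₂, hK₂⟩ := exists_lintegral_radialMajorant_rpow_le (p := p) (α := α) hp (by linarith)
  refine ⟨K₁ * K₂, fun f hf ↦ (hK₁ _ (measurable_radialMajorant f)).trans ?_⟩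
  rw [ENNReal.coe_mul, mul_assoc]
  gcongr
  exact hK₂ f hf

lemma exists_hilbertOp_radialMajorant_one_le (hp : 1 ≤ p) (hα1 : p - 2 < α)
    (hα2 : α < 2 * p - 2) :
    ∃ K : ℝ≥0, ∀ f : ℂ → ℂ, DifferentiableOn ℂ f (ball 0 1) →
      hilbertOp (radialMajorant f) 1 ≤ K * dirichletNorm p α f := by
  have hp0 : 0 < p := one_pos.trans_le hp
  obtain ⟨K, hK⟩ := exists_lintegral_hilbertOp_radialMajorant_rpow_le hp hα1 hα2
  refine ⟨((α + 1 + 1).toNNReal * K) ^ (1 / p), fun f hf ↦ ?_⟩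
  rw [ENNReal.coe_rpow_of_nonneg _ (by positivity)]
  refine le_rpow_one_div_mul_of_rpow_le_mul_rpow hp0 ?_
  calc
    hilbertOp (radialMajorant f) 1 ^ p ≤ ENNReal.ofReal (α + 1 + 1) *
        ∫⁻ a in Ioi 0, ENNReal.ofReal (a ^ (α + 1)) * hilbertOp (radialMajorant f) a ^ p :=
      apply_one_le_mul_setLIntegral_of_antitoneOn (ψ := fun a ↦ hilbertOp (radialMajorant f) a ^ p)
        (by linarith) fun a ha b hb hab ↦
          ENNReal.rpow_le_rpow (antitoneOn_hilbertOp _ ha hb hab) hp0.le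
    _ ≤ ENNReal.ofReal (α + 1 + 1) * (K * dirichletNorm p α f ^ p) := by
      gcongr
      exact hK f hf
    _ = ((α + 1 + 1).toNNReal * K : ℝ≥0) * dirichletNorm p α f ^ p := by
      rw [ENNReal.coe_mul, mul_assoc, ENNReal.ofReal]

lemma IsCarlesonWith.lintegral_enorm_le (h : IsCarlesonWith μ C)
    (hμ : ∀ᵐ t ∂μ, t ∈ Ico (0 : ℝ) 1) (hf : DifferentiableOn ℂ f (ball 0 1)) :
    ∫⁻ t : ℝ, ‖f t‖ₑ ∂μ ≤ 4 * (ENNReal.ofReal C * hilbertOp (radialMajorant f) 1) := by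
  calc
    ∫⁻ t : ℝ, ‖f t‖ₑ ∂μ ≤ ∫⁻ t : ℝ, 4 * (‖f t‖ₑ * ENNReal.ofReal ((1 - t + 1) ^ 2)⁻¹) ∂μ := by
      refine lintegral_mono_ae ?_
      filter_upwards [hμ] with t ht
      have hpos : 0 < 1 - t + 1 := by linarith [ht.2]
      have h4 : 1 ≤ 4 * ((1 - t + 1) ^ 2)⁻¹ := by
        rw [← div_eq_mul_inv, one_le_div (by positivity)]
        nlinarith [ht.1]
      rw [mul_left_comm, ← ENNReal.ofReal_ofNat, ← ENNReal.ofReal_mul (by norm_num)]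
      exact le_mul_of_one_le_right' (ENNReal.one_le_ofReal.2 h4)
    _ = 4 * ∫⁻ t : ℝ, ‖f t‖ₑ * ENNReal.ofReal ((1 - t + 1) ^ 2)⁻¹ ∂μ :=
      lintegral_const_mul' _ _ (by finiteness)
    _ ≤ 4 * (ENNReal.ofReal C * hilbertOp (radialMajorant f) 1) := by
      gcongr
      exact h.lintegral_enorm_mul_inv_sq_le hμ hf one_pos

lemma IsCarlesonWith.exists_lintegral_enorm_le (h : IsCarlesonWith μ C)
    (hμ : ∀ᵐ t ∂μ, t ∈ Ico (0 : ℝ) 1) (hp : 1 ≤ p) (hα1 : p - 2 < α) (hα2 : α < 2 * p - 2) :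
    ∃ K : ℝ≥0, ∀ f : ℂ → ℂ, DifferentiableOn ℂ f (ball 0 1) →
      ∫⁻ t : ℝ, ‖f t‖ₑ ∂μ ≤ K * dirichletNorm p α f := by
  obtain ⟨K, hK⟩ := exists_hilbertOp_radialMajorant_one_le hp hα1 hα2
  refine ⟨4 * (C.toNNReal * K), fun f hf ↦ (h.lintegral_enorm_le hμ hf).trans ?_⟩
  rw [ENNReal.coe_mul, ENNReal.coe_mul, mul_assoc, mul_assoc]
  exact mul_le_mul_right (mul_le_mul_right (hK f hf) _) _

lemma IsCarlesonWith.enorm_deriv_Imu_le_hilbertOp (h : IsCarlesonWith μ C)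
    (hμ : ∀ᵐ t ∂μ, t ∈ Ico (0 : ℝ) 1) (hf : DifferentiableOn ℂ f (ball 0 1))
    (hfμ : Integrable (fun t : ℝ ↦ f t) μ) {z : ℂ} (hz : z ∈ ball (0 : ℂ) 1) :
    ‖deriv (Imu μ f) z‖ₑ ≤ 9 * ENNReal.ofReal C * hilbertOp (radialMajorant f) ‖1 - z‖ := by
  have hz1 : 0 < ‖1 - z‖ := by
    refine norm_pos_iff.2 (sub_ne_zero.2 ?_)
    rintro rfl
    simp at hz
  rw [mul_assoc]
  exact (enorm_deriv_Imu_le hμ hfμ hz).trans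
    (mul_le_mul_right (h.lintegral_enorm_mul_inv_sq_le hμ hf hz1) _)

lemma IsCarlesonWith.exists_bergmanNorm_deriv_Imu_le (h : IsCarlesonWith μ C)
    (hμ : ∀ᵐ t ∂μ, t ∈ Ico (0 : ℝ) 1) (hp : 1 ≤ p) (hα1 : p - 2 < α) (hα2 : α < 2 * p - 2) :
    ∃ K : ℝ≥0, ∀ f : ℂ → ℂ, DifferentiableOn ℂ f (ball 0 1) → Integrable (fun t : ℝ ↦ f t) μ →
      bergmanNorm p α (deriv (Imu μ f)) ≤ K * dirichletNorm p α f := by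
  have hp0 : 0 < p := one_pos.trans_le hp
  obtain ⟨K₁, hK₁⟩ := exists_lintegral_norm_one_sub_le (α := α) (by linarith)
  obtain ⟨K₂, hK₂⟩ := exists_lintegral_hilbertOp_radialMajorant_rpow_le hp hα1 hα2
  refine ⟨9 * C.toNNReal * (K₁ * K₂) ^ (1 / p), fun f hf hfμ ↦ ?_⟩
  have hdisc : ∫⁻ z, hilbertOp (radialMajorant f) ‖1 - z‖ ^ p ∂weightedArea α ≤
      (K₁ * K₂ : ℝ≥0) * dirichletNorm p α f ^ p := by
    rw [ENNReal.coe_mul, mul_assoc]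
    refine (hK₁ (fun a ↦ hilbertOp (radialMajorant f) a ^ p)
      ((measurable_hilbertOp (measurable_radialMajorant f)).pow_const p) fun a ha b hb hab ↦
        ENNReal.rpow_le_rpow (antitoneOn_hilbertOp _ ha hb hab) hp0.le).trans ?_
    exact mul_le_mul_right (hK₂ f hf) _
  rw [ENNReal.coe_mul, mul_assoc, mul_left_comm, ENNReal.coe_rpow_of_nonneg _ (by positivity)]
  refine le_rpow_one_div_mul_of_rpow_le_mul_rpow hp0 ?_
  calc
    bergmanNorm p α (deriv (Imu μ f)) ^ p =
        ∫⁻ z, ‖deriv (Imu μ f) z‖ₑ ^ p ∂weightedArea α := bergmanNorm_rpow hp0 α _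
    _ ≤ ∫⁻ z, (9 * ENNReal.ofReal C * hilbertOp (radialMajorant f) ‖1 - z‖) ^ p
        ∂weightedArea α := by
      refine lintegral_mono_ae ?_
      filter_upwards [ae_weightedArea_mem_ball α] with z hz
      exact ENNReal.rpow_le_rpow (h.enorm_deriv_Imu_le_hilbertOp hμ hf hfμ hz) hp0.le
    _ = (9 * ENNReal.ofReal C) ^ p *
        ∫⁻ z, hilbertOp (radialMajorant f) ‖1 - z‖ ^ p ∂weightedArea α := by
      simp only [ENNReal.mul_rpow_of_nonneg _ (hilbertOp _ _) hp0.le]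
      exact lintegral_const_mul' _ _ (by finiteness)
    _ ≤ (9 * ENNReal.ofReal C) ^ p * ((K₁ * K₂ : ℝ≥0) * dirichletNorm p α f ^ p) := by gcongr
    _ = (K₁ * K₂ : ℝ≥0) * (9 * ENNReal.ofReal C * dirichletNorm p α f) ^ p := by
      rw [ENNReal.mul_rpow_of_nonneg _ (dirichletNorm p α f) hp0.le, mul_left_comm]

lemma IsCarlesonWith.exists_dirichletNorm_Imu_le (h : IsCarlesonWith μ C)
    (hμ : ∀ᵐ t ∂μ, t ∈ Ico (0 : ℝ) 1) (hp : 1 ≤ p) (hα1 : p - 2 < α) (hα2 : α < 2 * p - 2) :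
    ∃ K : ℝ≥0, ∀ f : ℂ → ℂ, DifferentiableOn ℂ f (ball 0 1) → dirichletNorm p α f < ⊤ →
      Integrable (fun t : ℝ ↦ f t) μ ∧
        dirichletNorm p α (Imu μ f) ≤ K * dirichletNorm p α f := by
  obtain ⟨K₁, hK₁⟩ := h.exists_lintegral_enorm_le hμ hp hα1 hα2
  obtain ⟨K₂, hK₂⟩ := h.exists_bergmanNorm_deriv_Imu_le hμ hp hα1 hα2
  refine ⟨K₁ + K₂, fun f hf hfin ↦ ?_⟩
  have hfμ : Integrable (fun t : ℝ ↦ f t) μ :=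
    ⟨aestronglyMeasurable_comp_ofReal hμ hf.continuousOn,
      (hK₁ f hf).trans_lt (ENNReal.mul_lt_top ENNReal.coe_lt_top hfin)⟩
  have hzero : ‖Imu μ f 0‖ₑ ≤ K₁ * dirichletNorm p α f :=
    calc
      ‖Imu μ f 0‖ₑ = ‖∫ t : ℝ, f t ∂μ‖ₑ := by simp [Imu]
      _ ≤ ∫⁻ t : ℝ, ‖f t‖ₑ ∂μ := enorm_integral_le_lintegral_enorm _
      _ ≤ K₁ * dirichletNorm p α f := hK₁ f hf
  refine ⟨hfμ, ?_⟩
  rw [dirichletNorm, ofReal_norm, ENNReal.coe_add, add_mul]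
  exact add_le_add hzero (hK₂ f hf hfμ)

end Carleson

/-! ### The necessity of the Carleson condition -/

/-- The Cauchy kernel `z ↦ 1 / (1 - a z)` with pole `1 / a`, the test function at the scale
`1 - a`. -/
noncomputable def cauchyKernel (a : ℝ) (z : ℂ) : ℂ := 1 / (1 - a * z)

section CauchyKernel

variable {a p α : ℝ}

lemma hasDerivAt_cauchyKernel (ha : a ∈ Ico 0 1) {z : ℂ} (hz : z ∈ ball (0 : ℂ) 1) :
    HasDerivAt (cauchyKernel a) (a / (1 - a * z) ^ 2) z := by
  have hz1 : 0 < 1 - ‖z‖ := sub_pos.2 (mem_ball_zero_iff.1 hz)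
  have hne := norm_pos_iff.1 (hz1.trans_le
    (one_sub_norm_le_norm_one_sub_mul ((Complex.norm_of_nonneg ha.1).trans_le ha.2.le)))
  exact (hasDerivAt_div_one_sub_mul 1 hne).congr_deriv (by rw [one_mul])

lemma differentiableOn_cauchyKernel (ha : a ∈ Ico 0 1) :
    DifferentiableOn ℂ (cauchyKernel a) (ball 0 1) :=
  fun _ hz ↦ (hasDerivAt_cauchyKernel ha hz).differentiableAt.differentiableWithinAt

lemma norm_deriv_cauchyKernel_le (ha : a ∈ Ico 0 1) {z : ℂ} (hz : z ∈ ball (0 : ℂ) 1) :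
    ‖deriv (cauchyKernel a) z‖ ≤ 9 * (‖1 - z‖ + (1 - a)) ^ (-2 : ℝ) := by
  have ha1 : 0 < 1 - a := sub_pos.2 ha.2
  have hlower := one_sub_add_norm_one_sub_le ⟨ha.1, ha.2.le⟩ (mem_ball_zero_iff.1 hz).le
  have hpos : 0 < 1 - a + ‖1 - z‖ := by linarith [norm_nonneg (1 - z)]
  have hpos' : 0 < ‖1 - a * z‖ := by linarith
  rw [(hasDerivAt_cauchyKernel ha hz).deriv, norm_div, norm_pow, Complex.norm_of_nonneg ha.1,
    add_comm, Real.rpow_neg hpos.le, Real.rpow_two]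
  calc
    a / ‖1 - a * z‖ ^ 2 ≤ 1 / ‖1 - a * z‖ ^ 2 := by gcongr; exact ha.2.le
    _ = 9 * ((3 * ‖1 - a * z‖) ^ 2)⁻¹ := by
      field_simp
      norm_num
    _ ≤ 9 * ((1 - a + ‖1 - z‖) ^ 2)⁻¹ := by gcongr

lemma enorm_deriv_cauchyKernel_rpow_le (hp : 0 ≤ p) (ha : a ∈ Ico 0 1) {z : ℂ}
    (hz : z ∈ ball (0 : ℂ) 1) :
    ‖deriv (cauchyKernel a) z‖ₑ ^ p ≤
      9 ^ p * ENNReal.ofReal ((‖1 - z‖ + (1 - a)) ^ (-(2 * p))) := by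
  have ha1 : 0 < 1 - a := sub_pos.2 ha.2
  rw [← neg_mul, Real.rpow_mul (by positivity),
    ← ENNReal.ofReal_rpow_of_nonneg (by positivity) hp, ← ENNReal.mul_rpow_of_nonneg _ _ hp,
    ← ENNReal.ofReal_ofNat, ← ENNReal.ofReal_mul (by norm_num), ← ofReal_norm]
  gcongr
  exact norm_deriv_cauchyKernel_le ha hz

lemma exists_lintegral_norm_one_sub_add_rpow_neg_le {s : ℝ} (hα : -1 < α) (hs : α + 2 < s) :
    ∃ K : ℝ≥0, ∀ v > 0, ∫⁻ z, ENNReal.ofReal ((‖1 - z‖ + v) ^ (-s)) ∂weightedArea α ≤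
      K * ENNReal.ofReal (v ^ (α + 2 - s)) := by
  obtain ⟨K, hK⟩ := exists_lintegral_norm_one_sub_le hα
  set k : ℝ := 1 / (α + 1 + 1) + 1 / (s - (α + 1) - 1)
  refine ⟨K * k.toNNReal, fun v hv ↦ ?_⟩
  set ψ : ℝ → ℝ≥0∞ := fun x ↦ ENNReal.ofReal ((x + v) ^ (-s))
  have hψ : AntitoneOn ψ (Ioi 0) := fun x (hx : 0 < x) y _ hxy ↦
    ENNReal.ofReal_le_ofReal
      (Real.rpow_le_rpow_of_nonpos (by positivity) (by gcongr) (by linarith))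
  calc
    ∫⁻ z, ψ ‖1 - z‖ ∂weightedArea α ≤
        K * ∫⁻ x in Ioi 0, ENNReal.ofReal (x ^ (α + 1)) * ψ x := hK ψ (by fun_prop) hψ
    _ = K * ∫⁻ x in Ioi 0, ENNReal.ofReal (x ^ (α + 1) * (x + v) ^ (-s)) := by
      congr 1
      refine setLIntegral_congr_fun measurableSet_Ioi fun x (hx : 0 < x) ↦ ?_
      exact (ENNReal.ofReal_mul (by positivity)).symm
    _ ≤ K * ENNReal.ofReal (k * v ^ (α + 1 + 1 - s)) := by
      gcongr
      exact lintegral_rpow_mul_add_rpow_neg_le (by linarith) (by linarith) hv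
    _ = (K * k.toNNReal : ℝ≥0) * ENNReal.ofReal (v ^ (α + 2 - s)) := by
      rw [ENNReal.ofReal_mul' (by positivity), ENNReal.coe_mul, mul_assoc, ENNReal.ofReal,
        add_assoc, one_add_one_eq_two]

lemma exists_bergmanNorm_deriv_cauchyKernel_le (hp : 0 < p) (hα1 : -1 < α)
    (hα2 : α < 2 * p - 2) :
    ∃ K : ℝ≥0, ∀ a ∈ Ico (0 : ℝ) 1,
      bergmanNorm p α (deriv (cauchyKernel a)) ≤
        K * ENNReal.ofReal ((1 - a) ^ ((α + 2) / p - 2)) := by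
  obtain ⟨K, hK⟩ := exists_lintegral_norm_one_sub_add_rpow_neg_le (s := 2 * p) hα1 (by linarith)
  refine ⟨(9 ^ p * K) ^ (1 / p), fun a ha ↦ ?_⟩
  have ha1 : 0 < 1 - a := sub_pos.2 ha.2
  rw [ENNReal.coe_rpow_of_nonneg _ (by positivity)]
  refine le_rpow_one_div_mul_of_rpow_le_mul_rpow hp ?_
  calc
    bergmanNorm p α (deriv (cauchyKernel a)) ^ p =
        ∫⁻ z, ‖deriv (cauchyKernel a) z‖ₑ ^ p ∂weightedArea α := bergmanNorm_rpow hp α _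
    _ ≤ ∫⁻ z, 9 ^ p * ENNReal.ofReal ((‖1 - z‖ + (1 - a)) ^ (-(2 * p))) ∂weightedArea α := by
      refine lintegral_mono_ae ?_
      filter_upwards [ae_weightedArea_mem_ball α] with z hz
      exact enorm_deriv_cauchyKernel_rpow_le hp.le ha hz
    _ = 9 ^ p * ∫⁻ z, ENNReal.ofReal ((‖1 - z‖ + (1 - a)) ^ (-(2 * p))) ∂weightedArea α :=
      lintegral_const_mul' _ _ (by finiteness)
    _ ≤ 9 ^ p * (K * ENNReal.ofReal ((1 - a) ^ (α + 2 - 2 * p))) := by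
      gcongr
      exact hK _ ha1
    _ = (9 ^ p * K : ℝ≥0) * ENNReal.ofReal ((1 - a) ^ ((α + 2) / p - 2)) ^ p := by
      rw [ENNReal.ofReal_rpow_of_nonneg (by positivity) hp.le, ← Real.rpow_mul ha1.le, sub_mul,
        div_mul_cancel₀ _ hp.ne', ENNReal.coe_mul, ENNReal.coe_rpow_of_nonneg _ hp.le, mul_assoc]
      rfl

lemma exists_dirichletNorm_cauchyKernel_le (hp : 0 < p) (hα1 : -1 < α) (hα2 : α < 2 * p - 2) :
    ∃ K : ℝ≥0, ∀ a ∈ Ico (0 : ℝ) 1,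
      dirichletNorm p α (cauchyKernel a) ≤
        K * ENNReal.ofReal ((1 - a) ^ ((α + 2) / p - 2)) := by
  obtain ⟨K, hK⟩ := exists_bergmanNorm_deriv_cauchyKernel_le hp hα1 hα2
  refine ⟨1 + K, fun a ha ↦ ?_⟩
  have hexp : (α + 2) / p - 2 ≤ 0 := by
    rw [sub_nonpos, div_le_iff₀ hp]
    linarith
  have hzero : ENNReal.ofReal ‖cauchyKernel a 0‖ ≤
      ENNReal.ofReal ((1 - a) ^ ((α + 2) / p - 2)) := by
    gcongr
    simpa [cauchyKernel] using
      Real.one_le_rpow_of_pos_of_le_one_of_nonpos (sub_pos.2 ha.2) (sub_le_self 1 ha.1) hexp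
  rw [dirichletNorm, ENNReal.coe_add, ENNReal.coe_one, add_mul, one_mul]
  exact add_le_add hzero (hK a ha)

end CauchyKernel

lemma exists_enorm_le_bergmanNorm {p α : ℝ} (hp : 1 ≤ p) (hα : -1 < α) :
    ∃ K : ℝ≥0, ∀ F : ℂ → ℂ, DifferentiableOn ℂ F (ball 0 1) → ∀ c ∈ ball (0 : ℂ) 1,
      ENNReal.ofReal ((1 - ‖c‖) ^ ((α + 2) / p)) * ‖F c‖ₑ ≤ K * bergmanNorm p α F := by
  have hp0 : 0 < p := one_pos.trans_le hp
  obtain ⟨K, hK⟩ := exists_enorm_rpow_le_setLIntegral_weightedArea (E := ℂ) hp hα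
  refine ⟨K ^ (1 / p), fun F hF c hc ↦ ?_⟩
  have hc1 : 0 ≤ 1 - ‖c‖ := (sub_pos.2 (mem_ball_zero_iff.1 hc)).le
  rw [ENNReal.coe_rpow_of_nonneg _ (by positivity)]
  refine le_rpow_one_div_mul_of_rpow_le_mul_rpow hp0 ?_
  rw [ENNReal.mul_rpow_of_nonneg _ _ hp0.le,
    ENNReal.ofReal_rpow_of_nonneg (by positivity) hp0.le, ← Real.rpow_mul hc1,
    div_mul_cancel₀ _ hp0.ne', bergmanNorm_rpow hp0]
  exact (hK F hF c hc).trans (mul_le_mul_right (setLIntegral_le_lintegral _ _) _)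

section Necessity

variable {μ : Measure ℝ} [IsFiniteMeasure μ]

lemma integrable_div_one_sub_mul_pow (hμ : ∀ᵐ t ∂μ, t ∈ Ico (0 : ℝ) 1) {a : ℝ}
    (ha : a ∈ Ico 0 1) (n : ℕ) : Integrable (fun t : ℝ ↦ t / (1 - a * t) ^ n) μ := by
  refine .of_bound (Measurable.aestronglyMeasurable (by fun_prop)) (1 / (1 - a) ^ n) ?_
  filter_upwards [hμ] with t ht
  have ha1 : 0 < 1 - a := sub_pos.2 ha.2
  have hlower : 1 - a ≤ 1 - a * t := by nlinarith [ha.1, ht.2]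
  have hpos : 0 < 1 - a * t := ha1.trans_le hlower
  have ht0 := ht.1
  rw [Real.norm_of_nonneg (by positivity)]
  gcongr
  exact ht.2.le

lemma integrable_cauchyKernel (hμ : ∀ᵐ t ∂μ, t ∈ Ico (0 : ℝ) 1) {a : ℝ} (ha : a ∈ Ico 0 1) :
    Integrable (fun t : ℝ ↦ cauchyKernel a t) μ := by
  simpa only [cauchyKernel, mul_comm] using integrable_div_one_sub_mul (f := fun _ ↦ 1) hμ
    (integrable_const 1) (ofReal_mem_ball ha)

lemma hasDerivAt_Imu_cauchyKernel (hμ : ∀ᵐ t ∂μ, t ∈ Ico (0 : ℝ) 1) {a : ℝ} (ha : a ∈ Ico 0 1) :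
    HasDerivAt (Imu μ (cauchyKernel a)) (∫ t, t / (1 - a * t) ^ 3 ∂μ : ℝ) a := by
  refine (hasDerivAt_Imu hμ (integrable_cauchyKernel hμ ha) (ofReal_mem_ball ha)).congr_deriv ?_
  rw [← integral_complex_ofReal]
  refine integral_congr_ae (.of_forall fun t ↦ ?_)
  simp only [cauchyKernel]
  push_cast
  rw [mul_comm (t : ℂ) a, one_div_mul_eq_div, div_div, ← pow_succ']

lemma mul_measure_Ico_le_integral (hμ : ∀ᵐ t ∂μ, t ∈ Ico (0 : ℝ) 1) {a : ℝ} (ha : a ∈ Ico 0 1) :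
    a * (μ (Ico a 1)).toReal ≤ 8 * (1 - a) ^ 3 * ∫ t, t / (1 - a * t) ^ 3 ∂μ := by
  have hint := integrable_div_one_sub_mul_pow hμ ha 3
  have ha1 : 0 < 1 - a := sub_pos.2 ha.2
  have hpos {t : ℝ} (ht : t ∈ Ico (0 : ℝ) 1) : 0 < 1 - a * t := by nlinarith [ha.1, ht.2]
  calc
    a * (μ (Ico a 1)).toReal = ∫ _ in Ico a 1, a ∂μ := by
      rw [setIntegral_const, smul_eq_mul, mul_comm, Measure.real]
    _ ≤ ∫ t in Ico a 1, 8 * (1 - a) ^ 3 * (t / (1 - a * t) ^ 3) ∂μ := by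
      refine setIntegral_mono_on (integrable_const _) (hint.const_mul _).integrableOn
        measurableSet_Ico fun t ht ↦ ?_
      have hpos' := hpos ⟨ha.1.trans ht.1, ht.2⟩
      have hupper : 1 - a * t ≤ 2 * (1 - a) := by nlinarith [ha.1, ha.2, ht.1]
      calc
        a ≤ t := ht.1
        _ = (1 - a * t) ^ 3 * (t / (1 - a * t) ^ 3) := by rw [mul_div_cancel₀ _ (by positivity)]
        _ ≤ (2 * (1 - a)) ^ 3 * (t / (1 - a * t) ^ 3) := by
          have : 0 ≤ t := ha.1.trans ht.1
          gcongr
        _ = 8 * (1 - a) ^ 3 * (t / (1 - a * t) ^ 3) := by ring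
    _ ≤ ∫ t, 8 * (1 - a) ^ 3 * (t / (1 - a * t) ^ 3) ∂μ := by
      refine setIntegral_le_integral (hint.const_mul _) ?_
      filter_upwards [hμ] with t ht
      have := hpos ht
      have := ht.1
      simp only [Pi.zero_apply]
      positivity
    _ = 8 * (1 - a) ^ 3 * ∫ t, t / (1 - a * t) ^ 3 ∂μ := integral_const_mul _ _

lemma exists_sq_mul_norm_deriv_Imu_cauchyKernel_le {p α : ℝ} (hp : 1 ≤ p) (hα1 : -1 < α)
    (hα2 : α < 2 * p - 2) (hμ : ∀ᵐ t ∂μ, t ∈ Ico (0 : ℝ) 1) {K : ℝ≥0}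
    (h : ∀ f : ℂ → ℂ, DifferentiableOn ℂ f (ball 0 1) → dirichletNorm p α f < ⊤ →
      dirichletNorm p α (Imu μ f) ≤ K * dirichletNorm p α f) :
    ∃ M : ℝ≥0, ∀ a ∈ Ico (0 : ℝ) 1,
      (1 - a) ^ 2 * ‖deriv (Imu μ (cauchyKernel a)) a‖ ≤ M := by
  obtain ⟨K₁, hK₁⟩ := exists_enorm_le_bergmanNorm hp hα1
  obtain ⟨K₂, hK₂⟩ := exists_dirichletNorm_cauchyKernel_le (one_pos.trans_le hp) hα1 hα2
  refine ⟨K₁ * (K * K₂), fun a ha ↦ ?_⟩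
  have ha1 : 0 < 1 - a := sub_pos.2 ha.2
  set s := (α + 2) / p
  set D := deriv (Imu μ (cauchyKernel a))
  have hdiff : DifferentiableOn ℂ (Imu μ (cauchyKernel a)) (ball 0 1) :=
    differentiableOn_Imu hμ (integrable_cauchyKernel hμ ha)
  have hnorm := h _ (differentiableOn_cauchyKernel ha) ((hK₂ a ha).trans_lt (by finiteness))
  have hD : ENNReal.ofReal ((1 - a) ^ s * ‖D a‖) ≤
      ENNReal.ofReal (K₁ * (K * K₂) * (1 - a) ^ (s - 2)) :=
    calc
      ENNReal.ofReal ((1 - a) ^ s * ‖D a‖) = ENNReal.ofReal ((1 - ‖(a : ℂ)‖) ^ s) * ‖D a‖ₑ := by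
        rw [Complex.norm_of_nonneg ha.1, ENNReal.ofReal_mul (by positivity), ofReal_norm]
      _ ≤ K₁ * bergmanNorm p α D := hK₁ D (hdiff.deriv isOpen_ball) a (ofReal_mem_ball ha)
      _ ≤ K₁ * (K * (K₂ * ENNReal.ofReal ((1 - a) ^ (s - 2)))) := by
        gcongr
        exact le_add_self.trans (hnorm.trans (mul_le_mul_right (hK₂ a ha) _))
      _ = ENNReal.ofReal (K₁ * (K * K₂) * (1 - a) ^ (s - 2)) := by
        rw [ENNReal.ofReal_mul (by positivity)]
        norm_cast
        rw [ENNReal.ofReal_coe_nnreal]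
        push_cast
        ring
  refine le_of_mul_le_mul_right ?_ (Real.rpow_pos_of_pos ha1 (s - 2))
  calc
    (1 - a) ^ 2 * ‖D a‖ * (1 - a) ^ (s - 2) = (1 - a) ^ s * ‖D a‖ := by
      rw [Real.rpow_sub ha1, Real.rpow_two]
      field_simp
    _ ≤ K₁ * (K * K₂) * (1 - a) ^ (s - 2) :=
      (ENNReal.ofReal_le_ofReal_iff (by positivity)).1 hD

lemma exists_isCarlesonWith_of_dirichletNorm_Imu_le {p α : ℝ} (hp : 1 ≤ p) (hα1 : -1 < α)
    (hα2 : α < 2 * p - 2) (hμ : ∀ᵐ t ∂μ, t ∈ Ico (0 : ℝ) 1) {K : ℝ≥0}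
    (h : ∀ f : ℂ → ℂ, DifferentiableOn ℂ f (ball 0 1) → dirichletNorm p α f < ⊤ →
      dirichletNorm p α (Imu μ f) ≤ K * dirichletNorm p α f) :
    ∃ C > 0, IsCarlesonWith μ C := by
  obtain ⟨M, hM⟩ := exists_sq_mul_norm_deriv_Imu_cauchyKernel_le hp hα1 hα2 hμ h
  refine ⟨8 * M + (μ univ).toReal + 1, by positivity, fun a ha ↦ ?_⟩
  have ha1 : 0 < 1 - a := sub_pos.2 ha.2
  have hfar : (μ (Ico a 1)).toReal ≤ (μ univ).toReal :=
    ENNReal.toReal_mono (measure_ne_top _ _) (measure_mono (subset_univ _))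
  have hnear : a * (μ (Ico a 1)).toReal ≤ 8 * M * (1 - a) :=
    calc
      a * (μ (Ico a 1)).toReal ≤ 8 * (1 - a) ^ 3 * ∫ t, t / (1 - a * t) ^ 3 ∂μ :=
        mul_measure_Ico_le_integral hμ ha
      _ ≤ 8 * (1 - a) ^ 3 * ‖deriv (Imu μ (cauchyKernel a)) a‖ := by
        rw [(hasDerivAt_Imu_cauchyKernel hμ ha).deriv, Complex.norm_real]
        gcongr
        exact Real.le_norm_self _
      _ = 8 * ((1 - a) ^ 2 * ‖deriv (Imu μ (cauchyKernel a)) a‖) * (1 - a) := by ring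
      _ ≤ 8 * M * (1 - a) := by
        gcongr
        exact hM a ha
  calc
    (μ (Ico a 1)).toReal = a * (μ (Ico a 1)).toReal + (1 - a) * (μ (Ico a 1)).toReal := by ring
    _ ≤ 8 * M * (1 - a) + (1 - a) * (μ univ).toReal := by gcongr
    _ ≤ (8 * M + (μ univ).toReal + 1) * (1 - a) := by linarith

end Necessity

theorem Hmu_bounded_Dpa_iff_Carleson_general (p α : ℝ) (hp : 1 ≤ p)
    (hα1 : p - 2 < α) (hα2 : α < 2 * p - 2)
    (μ : Measure ℝ) [IsFiniteMeasure μ] (hsupp : μ (Ico (0 : ℝ) 1)ᶜ = 0) :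
    (∃ C > 0, ∀ t ∈ Ico (0 : ℝ) 1, (μ (Ico t 1)).toReal ≤ C * (1 - t)) ↔
    (∃ C > 0, ∀ f : ℂ → ℂ, DifferentiableOn ℂ f (ball (0 : ℂ) 1) → dirichletNorm p α f < ⊤ →
      (∀ z ∈ ball (0 : ℂ) 1, Integrable (fun t : ℝ => f (t : ℂ) / (1 - (t : ℂ) * z)) μ) ∧
      DifferentiableOn ℂ (Imu μ f) (ball (0 : ℂ) 1) ∧
      dirichletNorm p α (Imu μ f) ≤ ENNReal.ofReal C * dirichletNorm p α f) := by
  have hμ : ∀ᵐ t ∂μ, t ∈ Ico (0 : ℝ) 1 := ae_iff.2 hsupp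
  constructor
  · rintro ⟨C, -, hC : IsCarlesonWith μ C⟩
    obtain ⟨K, hK⟩ := hC.exists_dirichletNorm_Imu_le hμ hp hα1 hα2
    refine ⟨K + 1, by positivity, fun f hf hfin ↦ ?_⟩
    obtain ⟨hfμ, hnorm⟩ := hK f hf hfin
    refine ⟨fun z hz ↦ integrable_div_one_sub_mul hμ hfμ hz, differentiableOn_Imu hμ hfμ,
      hnorm.trans ?_⟩
    gcongr
    rw [ENNReal.le_ofReal_iff_toReal_le ENNReal.coe_ne_top (by positivity)]
    simp
  · rintro ⟨C, -, h⟩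
    exact exists_isCarlesonWith_of_dirichletNorm_Imu_le hp (by linarith) hα2 hμ
      fun f hf hfin ↦ (h f hf hfin).2.2

/-- For `p > 1` and `p-2 < α ≤ p-1`, the measure `μ` is a Carleson
measure if and only if `I_μ` is well defined and bounded from `𝒟^p_α` into itself. -/
theorem Hmu_bounded_Dpa_iff_Carleson (p α : ℝ) (hp : 1 < p)
    (hα1 : p - 2 < α) (hα2 : α ≤ p - 1)
    (μ : Measure ℝ) [IsFiniteMeasure μ] (hsupp : μ (Ico (0 : ℝ) 1)ᶜ = 0) :
    (∃ C > 0, ∀ t ∈ Ico (0 : ℝ) 1, (μ (Ico t 1)).toReal ≤ C * (1 - t)) ↔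
    (∃ C > 0, ∀ f : ℂ → ℂ, DifferentiableOn ℂ f (ball (0 : ℂ) 1) → dirichletNorm p α f < ⊤ →
      (∀ z ∈ ball (0 : ℂ) 1, Integrable (fun t : ℝ => f (t : ℂ) / (1 - (t : ℂ) * z)) μ) ∧
      DifferentiableOn ℂ (Imu μ f) (ball (0 : ℂ) 1) ∧
      dirichletNorm p α (Imu μ f) ≤ ENNReal.ofReal C * dirichletNorm p α f) :=
  Hmu_bounded_Dpa_iff_Carleson_general p α hp.le hα1 (by linarith) μ hsupp
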